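/- arXiv:1605.04193 — 2 statements merged into one kernel-verified Lean document; each statement's English description precedes it below -/
import Mathlib

section
/- Let Ω ⊂ ℝ² be a nonempty bounded open simply connected set with smooth boundary, B smooth on a neighborhood of the closure of Ω with B(x) > 0 there, ψ smooth on a neighborhood of the closure of Ω with Δψ = B in Ω and ψ = 0 on ∂Ω, ψ_min := inf_Ω ψ, and A = (−∂₂ψ, ∂₁ψ) the canonical vector potential. Assume there exists x₀ ∈ Ω with ψ(x₀) = ψ_min and det Hess ψ(x₀) = 0 (degenerate Hessian at a minimum point). Then there are constants C > 0 and h₀ > 0 such that λ_{P₋}(h) ≤ C h^{1/4} exp(2ψ_min/h) for all 0 < h < h₀. -/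
/-!
The upper bound comes from one explicit test function, `u = φ(ψ/h)` on `Ω`, where
`φ(τ) = G(τ) exp(-τ)` and `G` is a smooth cutoff that is `0` for `τ ≥ -1` and `1` for `τ ≤ -2`.
Because `ψ = 0` on the boundary, `u` is smooth with compact support in `Ω` (`smooth_cut_mul`).

*Numerator.* For real `u` of this form the Pauli form is
`∫ (φ'² + φ²)(ψ/h) |∇ψ|² - h ∫ B φ²(ψ/h)`. With `K` the primitive of `-(φ'² + φ²)` that
vanishes near `0`, the divergence theorem for `K(ψ/h) ∇ψ` together with `Δψ = B` turns it into
`h ∫ B (K - φ²)(ψ/h)`. Since `(K - φ²)' = -(φ' + φ)²` is compactly supported, `K - φ²` is bounded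
and the form is at most `h M ∫ B` (`exists_profile`, `pauli_cut_le`).

*Denominator.* The maximum principle gives `ψ_min < 0` (`min_neg`). Let `v` be a kernel vector of
the Hessian at `x₀` and `w` orthogonal to it. As `x₀` is a minimum, the third derivative along `v`
vanishes as well, so `ψ(x₀ + t v + s w) ≤ ψ_min + C (s² + t⁴)` (`quartic_bound`). On the
parallelogram `0 ≤ s ≤ h^(1/2)`, `0 ≤ t ≤ h^(1/4)`, whose area is a multiple of `h^(3/4)`
(`para_volume`), one has `ψ ≤ ψ_min + 2 C h`, hence `|u|² ≥ exp(-2 ψ_min / h - 4 C)` for small `h`.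
The quotient is therefore at most a constant times `h^(1/4) exp(2 ψ_min / h)`.
-/

open MeasureTheory Filter Topology

noncomputable section

abbrev E2 : Type := EuclideanSpace ℝ (Fin 2)

/-- Partial derivative of a complex-valued function in the `i`-th coordinate direction. -/
def pdC (i : Fin 2) (f : E2 → ℂ) (x : E2) : ℂ :=
  fderiv ℝ f x (EuclideanSpace.single i 1)

/-- Partial derivative of a real-valued function in the `i`-th coordinate direction. -/
def pdR (i : Fin 2) (f : E2 → ℝ) (x : E2) : ℝ :=
  fderiv ℝ f x (EuclideanSpace.single i 1)

/-- The Laplacian `Δf = ∂₁²f + ∂₂²f`. -/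
def lapl (f : E2 → ℝ) (x : E2) : ℝ :=
  pdR 0 (pdR 0 f) x + pdR 1 (pdR 1 f) x

/-- The Pauli quadratic form
`Q_h(u) = ∫_Ω (|h∂₁u − iA₁u|² + |h∂₂u − iA₂u|²) dx − h∫_Ω B|u|² dx`. -/
def pauliQ (Ω : Set E2) (A₁ A₂ B : E2 → ℝ) (h : ℝ) (u : E2 → ℂ) : ℝ :=
  (∫ x in Ω, (‖(h : ℂ) * pdC 0 u x - Complex.I * (A₁ x : ℂ) * u x‖ ^ 2
      + ‖(h : ℂ) * pdC 1 u x - Complex.I * (A₂ x : ℂ) * u x‖ ^ 2))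
    - h * ∫ x in Ω, B x * ‖u x‖ ^ 2

/-- `u ∈ C_c^∞(Ω; ℂ)`. -/
def IsCptSmoothIn (Ω : Set E2) (u : E2 → ℂ) : Prop :=
  ContDiff ℝ (⊤ : ℕ∞) u ∧ HasCompactSupport u ∧ tsupport u ⊆ Ω

/-- The lowest Dirichlet Pauli eigenvalue
`λ_{P₋}(h) = inf { Q_h(u)/∫_Ω|u|² : 0 ≠ u ∈ C_c^∞(Ω;ℂ) }`. -/
def lambdaP (Ω : Set E2) (A₁ A₂ B : E2 → ℝ) (h : ℝ) : ℝ :=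
  sInf { r | ∃ u : E2 → ℂ, IsCptSmoothIn Ω u ∧ u ≠ 0 ∧
    r = pauliQ Ω A₁ A₂ B h u / ∫ x in Ω, ‖u x‖ ^ 2 }

/-- The Hessian matrix of second partial derivatives of `ψ` at `x`. -/
def hess (ψ : E2 → ℝ) (x : E2) : Matrix (Fin 2) (Fin 2) ℝ :=
  Matrix.of fun i j => pdR i (pdR j ψ) x

/-- `Ω` has smooth boundary: near each boundary point, `Ω` is the sublevel set of a smooth
function with nonvanishing differential. -/
def HasSmoothBoundary (Ω : Set E2) : Prop :=
  ∀ x ∈ frontier Ω, ∃ (V : Set E2) (f : E2 → ℝ), IsOpen V ∧ x ∈ V ∧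
    ContDiffOn ℝ (⊤ : ℕ∞) f V ∧ (∀ y ∈ V, fderiv ℝ f y ≠ 0) ∧
    Ω ∩ V = {y ∈ V | f y < 0}

lemma contDiff_of_tsupport_pt {f : E2 → ℝ}
    (hf : ∀ x ∈ tsupport f, ContDiffAt ℝ (⊤ : ℕ∞) f x) : ContDiff ℝ (⊤ : ℕ∞) f := by
  refine contDiff_iff_contDiffAt.2 fun x => ?_
  by_cases hx : x ∈ tsupport f
  · exact hf x hx
  · exact contDiffAt_const.congr_of_eventuallyEq (notMem_tsupport_iff_eventuallyEq.1 hx)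

/-! ### The one-dimensional profile -/

/-- The profile `φ(τ) = G(τ) exp(-τ)`, with `G` a smooth cutoff equal to `0` for `τ ≥ -1` and to `1`
for `τ ≤ -2`, together with the primitive `K` of `-(φ'² + φ²)` vanishing for `τ ≥ -1`. Since
`(K - φ²)' = -(φ' + φ)² = -(G' exp(-τ))²` is supported in `[-2, -1]`, the difference `K - φ²`
is bounded, although `K` and `φ²` grow exponentially at `-∞`. -/
lemma exists_profile : ∃ (φ K : ℝ → ℝ) (M : ℝ), 0 ≤ M ∧
    ContDiff ℝ (⊤ : ℕ∞) φ ∧ ContDiff ℝ (⊤ : ℕ∞) K ∧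
    (∀ τ, -1 ≤ τ → φ τ = 0) ∧ (∀ τ, -1 ≤ τ → K τ = 0) ∧
    (∀ τ, deriv K τ = -(deriv φ τ ^ 2 + φ τ ^ 2)) ∧
    (∀ τ, τ ≤ -2 → φ τ = Real.exp (-τ)) ∧ ∀ τ, K τ - φ τ ^ 2 ≤ M := by
  set G : ℝ → ℝ := fun τ => Real.smoothTransition (-1 - τ) with hG
  have hGs : ContDiff ℝ (⊤ : ℕ∞) G :=
    Real.smoothTransition.contDiff.comp (contDiff_const.sub contDiff_id)
  have hG0 : ∀ τ, -1 ≤ τ → G τ = 0 := fun τ h =>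
    Real.smoothTransition.zero_of_nonpos (by linarith)
  have hG1 : ∀ τ, τ ≤ -2 → G τ = 1 := fun τ h =>
    Real.smoothTransition.one_of_one_le (by linarith)
  -- `G` attains its minimum `0` on `[-1, ∞)` and its maximum `1` on `(-∞, -2]`.
  have hG'0 : ∀ τ, -1 ≤ τ → deriv G τ = 0 := fun τ h => by
    refine IsLocalMin.deriv_eq_zero (Eventually.of_forall fun y => ?_)
    rw [hG0 τ h]; exact Real.smoothTransition.nonneg _
  have hG'1 : ∀ τ, τ ≤ -2 → deriv G τ = 0 := fun τ h => by
    refine IsLocalMax.deriv_eq_zero (Eventually.of_forall fun y => ?_)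
    rw [hG1 τ h]; exact Real.smoothTransition.le_one _
  have hGd : Differentiable ℝ G := hGs.differentiable (by simp)
  have hG's : ContDiff ℝ (⊤ : ℕ∞) (deriv G) := (contDiff_infty_iff_deriv.1 hGs).2
  set w : ℝ → ℝ := fun τ => (deriv G τ * Real.exp (-τ)) ^ 2 with hw
  have hes : ContDiff ℝ (⊤ : ℕ∞) (fun τ : ℝ => Real.exp (-τ)) :=
    Real.contDiff_exp.comp contDiff_id.neg
  have hws : ContDiff ℝ (⊤ : ℕ∞) w := (hG's.mul hes).pow 2
  set φ : ℝ → ℝ := fun τ => G τ * Real.exp (-τ) with hφ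
  have hφs : ContDiff ℝ (⊤ : ℕ∞) φ := hGs.mul hes
  -- `W` is `K - φ²`.
  set W : ℝ → ℝ := fun τ => -∫ s in (0:ℝ)..τ, w s with hW
  have hWd : ∀ τ, HasDerivAt W (-w τ) τ := fun τ =>
    (intervalIntegral.integral_hasDerivAt_right (hws.continuous.intervalIntegrable _ _)
      (hws.continuous.stronglyMeasurableAtFilter _ _) hws.continuous.continuousAt).neg
  have hWs : ContDiff ℝ (⊤ : ℕ∞) W := by
    refine contDiff_infty_iff_deriv.2 ⟨fun τ => (hWd τ).differentiableAt, ?_⟩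
    rw [show deriv W = fun τ => -w τ from funext fun τ => (hWd τ).deriv]
    exact hws.neg
  have hwi : Integrable w := by
    refine hws.continuous.integrable_of_hasCompactSupport
      (HasCompactSupport.intro (isCompact_Icc (a := (-2:ℝ)) (b := -1)) fun x hx => ?_)
    rcases le_total x (-2) with h | h
    · simp [hw, hG'1 x h]
    · have : -1 ≤ x := by
        by_contra h'
        exact hx ⟨h, by linarith⟩
      simp [hw, hG'0 x this]
  have hφd : ∀ τ, HasDerivAt φ ((deriv G τ - G τ) * Real.exp (-τ)) τ := fun τ => by
    have h1 := (hGd τ).hasDerivAt.mul ((hasDerivAt_neg τ).exp)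
    refine h1.congr_deriv ?_
    ring
  refine ⟨φ, fun τ => W τ + φ τ ^ 2, ∫ s, w s, integral_nonneg fun _ => sq_nonneg _, hφs,
    hWs.add (hφs.pow 2), ?_, ?_, ?_, ?_, ?_⟩
  · intro τ h; simp [hφ, hG0 τ h]
  · intro τ h
    have : ∫ s in (0:ℝ)..τ, w s = 0 := by
      rw [intervalIntegral.integral_congr (g := fun _ => (0:ℝ))]
      · simp
      · intro s hs
        have : -1 ≤ s := by
          rcases Set.mem_uIcc.1 hs with h' | h' <;> linarith [h'.1]
        simp [hw, hG'0 s this]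
    simp [hW, this, hφ, hG0 τ h]
  · intro τ
    have h1 := (hWd τ).add ((hφd τ).pow 2)
    have h2 : deriv (fun τ => W τ + φ τ ^ 2) τ = _ := h1.deriv
    rw [h2, (hφd τ).deriv]
    simp only [hw, hφ]
    push_cast
    ring
  · intro τ h; simp [hφ, hG1 τ h]
  · intro τ
    have h1 : ‖∫ s in (0:ℝ)..τ, w s‖ ≤ ∫ s, w s := by
      refine intervalIntegral.norm_integral_le_integral_norm_uIoc.trans ?_
      have : (fun s => ‖w s‖) = w := funext fun s => Real.norm_of_nonneg (sq_nonneg _)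
      rw [this]
      exact setIntegral_le_integral hwi (Eventually.of_forall fun _ => sq_nonneg _)
    have h2 := neg_abs_le (∫ s in (0:ℝ)..τ, w s)
    rw [Real.norm_eq_abs] at h1
    simp only [hW]
    linarith

/-! ### Test functions built from `ψ` and integration by parts -/

/-- `f(ψ/h)` on `Ω`, extended by zero. -/
def cutFun (Ω : Set E2) (ψ : E2 → ℝ) (h : ℝ) (f : ℝ → ℝ) (x : E2) : ℝ :=
  open Classical in if x ∈ Ω then f (ψ x / h) else 0

/-- If `f` vanishes on `[-1, ∞)`, then `f(ψ/h)` is supported in `{x ∈ closure Ω | ψ x ≤ -h}`, a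
compact set contained in `Ω` because `ψ = 0` on the boundary. -/
lemma smooth_cut_mul {Ω : Set E2} (hΩo : IsOpen Ω) (hΩb : Bornology.IsBounded Ω)
    {ψ : E2 → ℝ} (hψc : ContinuousOn ψ (closure Ω)) (hψs : ContDiffOn ℝ (⊤ : ℕ∞) ψ Ω)
    (hbd : ∀ x ∈ frontier Ω, ψ x = 0) {h : ℝ} (hh : 0 < h)
    {f : ℝ → ℝ} (hf : ContDiff ℝ (⊤ : ℕ∞) f) (hf0 : ∀ τ, -1 ≤ τ → f τ = 0)
    {g : E2 → ℝ} (hg : ContDiffOn ℝ (⊤ : ℕ∞) g Ω) :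
    ContDiff ℝ (⊤ : ℕ∞) (fun x => cutFun Ω ψ h f x * g x) ∧
    HasCompactSupport (fun x => cutFun Ω ψ h f x * g x) ∧
    tsupport (fun x => cutFun Ω ψ h f x * g x) ⊆ Ω := by
  set S : Set E2 := closure Ω ∩ ψ ⁻¹' Set.Iic (-h) with hS
  have hSc : IsClosed S := hψc.preimage_isClosed_of_isClosed isClosed_closure isClosed_Iic
  have hSk : IsCompact S := hΩb.isCompact_closure.of_isClosed_subset hSc Set.inter_subset_left
  have hSΩ : S ⊆ Ω := by
    rintro x ⟨hx1, hx2⟩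
    by_contra hx
    have : x ∈ frontier Ω := ⟨hx1, by rwa [hΩo.interior_eq]⟩
    have h0 := hbd x this
    simp only [Set.mem_preimage, Set.mem_Iic] at hx2
    linarith
  have hsupp : Function.support (fun x => cutFun Ω ψ h f x * g x) ⊆ S := by
    intro x hx
    have h1 : cutFun Ω ψ h f x ≠ 0 := left_ne_zero_of_mul hx
    unfold cutFun at h1
    split_ifs at h1 with hxΩ
    · refine ⟨subset_closure hxΩ, ?_⟩
      by_contra h2
      simp only [Set.mem_preimage, Set.mem_Iic, not_le] at h2
      exact h1 (hf0 _ (by rw [le_div_iff₀ hh]; linarith))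
    · exact absurd rfl h1
  have htS : tsupport (fun x => cutFun Ω ψ h f x * g x) ⊆ S := closure_minimal hsupp hSc
  refine ⟨?_, hSk.of_isClosed_subset (isClosed_tsupport _) htS, htS.trans hSΩ⟩
  refine contDiff_of_tsupport_pt fun x hx => ?_
  have hxΩ := hSΩ (htS hx)
  have h1 : ContDiffOn ℝ (⊤ : ℕ∞) (fun x => f (ψ x / h) * g x) Ω :=
    (hf.comp_contDiffOn (hψs.div_const h)).mul hg
  refine (h1.contDiffAt (hΩo.mem_nhds hxΩ)).congr_of_eventuallyEq ?_
  filter_upwards [hΩo.mem_nhds hxΩ] with y hy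
  simp [cutFun, hy]

lemma hasFDerivAt_cut {Ω : Set E2} (hΩo : IsOpen Ω)
    {ψ : E2 → ℝ} (hψs : ContDiffOn ℝ (⊤ : ℕ∞) ψ Ω) {h : ℝ}
    {f : ℝ → ℝ} (hf : ContDiff ℝ (⊤ : ℕ∞) f) {x : E2} (hx : x ∈ Ω) :
    HasFDerivAt (cutFun Ω ψ h f) ((deriv f (ψ x / h) / h) • fderiv ℝ ψ x) x := by
  have h1 : HasFDerivAt ψ (fderiv ℝ ψ x) x :=
    ((hψs.contDiffAt (hΩo.mem_nhds hx)).differentiableAt (by simp)).hasFDerivAt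
  have h2 : HasDerivAt (fun r : ℝ => f (r / h)) (deriv f (ψ x / h) / h) (ψ x) := by
    have := ((hf.differentiable (by simp)) (ψ x / h)).hasDerivAt.comp (ψ x)
      ((hasDerivAt_id (ψ x)).div_const h)
    refine this.congr_deriv ?_
    simp [div_eq_mul_inv]
  have h3 := h2.comp_hasFDerivAt x h1
  refine h3.congr_of_eventuallyEq ?_
  filter_upwards [hΩo.mem_nhds hx] with y hy
  simp [cutFun, hy]

lemma contDiffOn_pdR {Ω : Set E2} (hΩo : IsOpen Ω)
    {ψ : E2 → ℝ} (hψs : ContDiffOn ℝ (⊤ : ℕ∞) ψ Ω) (i : Fin 2) :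
    ContDiffOn ℝ (⊤ : ℕ∞) (pdR i ψ) Ω :=
  (hψs.fderiv_of_isOpen hΩo (m := (⊤ : ℕ∞)) (by simp)).clm_apply contDiffOn_const

lemma integral_pdR_eq_zero {V : E2 → ℝ} (hV : ContDiff ℝ (⊤ : ℕ∞) V)
    (hc : HasCompactSupport V) (i : Fin 2) :
    Integrable (pdR i V) ∧ ∫ x, pdR i V x = 0 := by
  have h1 : Integrable (pdR i V) := by
    refine Continuous.integrable_of_hasCompactSupport ?_ ?_
    · exact (hV.continuous_fderiv (by simp)).clm_apply continuous_const
    · exact hc.fderiv_apply (𝕜 := ℝ) _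
  refine ⟨h1, ?_⟩
  have := integral_mul_fderiv_eq_neg_fderiv_mul_of_integrable (μ := (volume : Measure E2))
    (f := fun _ : E2 => (1:ℝ)) (g := V) (v := EuclideanSpace.single i 1)
    (by simp) (by simp only [one_mul]; exact h1)
    (by simpa using hV.continuous.integrable_of_hasCompactSupport hc)
    (by intro x _; fun_prop) (fun x _ => hV.differentiable (by simp) x)
  simpa [pdR] using this

/-- Upper bound for the Pauli form of `u = φ(ψ/h)`. As `u` is real, the form is
`∫ (φ'² + φ²)(ψ/h) |∇ψ|² - h ∫ B φ²(ψ/h)`. The compactly supported field `K(ψ/h) ∇ψ` has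
divergence `-(φ'² + φ²)(ψ/h) |∇ψ|² / h + K(ψ/h) B`, so the form equals `h ∫ B (K - φ²)(ψ/h)`. -/
lemma pauli_cut_le {Ω : Set E2} (hΩo : IsOpen Ω) (hΩb : Bornology.IsBounded Ω)
    {B ψ : E2 → ℝ} (hψc : ContinuousOn ψ (closure Ω)) (hψs : ContDiffOn ℝ (⊤ : ℕ∞) ψ Ω)
    (hBs : ContDiffOn ℝ (⊤ : ℕ∞) B Ω) (hB0 : ∀ x ∈ Ω, 0 ≤ B x) (hBi : IntegrableOn B Ω)
    (hΔ : ∀ x ∈ Ω, lapl ψ x = B x)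
    (hbd : ∀ x ∈ frontier Ω, ψ x = 0) {h : ℝ} (hh : 0 < h)
    {φ K : ℝ → ℝ} {M : ℝ} (hφ : ContDiff ℝ (⊤ : ℕ∞) φ) (hK : ContDiff ℝ (⊤ : ℕ∞) K)
    (hφ0 : ∀ τ, -1 ≤ τ → φ τ = 0) (hK0 : ∀ τ, -1 ≤ τ → K τ = 0)
    (hK' : ∀ τ, deriv K τ = -(deriv φ τ ^ 2 + φ τ ^ 2))
    (hM : ∀ τ, K τ - φ τ ^ 2 ≤ M) :
    pauliQ Ω (fun x => -pdR 1 ψ x) (fun x => pdR 0 ψ x) B h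
      (fun x => (cutFun Ω ψ h φ x : ℂ)) ≤ h * (M * ∫ x in Ω, B x) := by
  have hp := fun i => contDiffOn_pdR hΩo hψs i
  have hV := fun i => smooth_cut_mul hΩo hΩb hψc hψs hbd hh hK hK0 (hp i)
  have hKB := smooth_cut_mul hΩo hΩb hψc hψs hbd hh hK hK0 hBs
  have hφB := smooth_cut_mul hΩo hΩb hψc hψs hbd hh (f := fun τ => φ τ ^ 2) (hφ.pow 2)
    (fun τ hτ => by simp [hφ0 τ hτ]) hBs
  have iKB : IntegrableOn (fun x => cutFun Ω ψ h K x * B x) Ω :=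
    (hKB.1.continuous.integrable_of_hasCompactSupport hKB.2.1).integrableOn
  have iφB : IntegrableOn (fun x => cutFun Ω ψ h (fun τ => φ τ ^ 2) x * B x) Ω :=
    (hφB.1.continuous.integrable_of_hasCompactSupport hφB.2.1).integrableOn
  have hI := fun i => integral_pdR_eq_zero (hV i).1 (hV i).2.1 i
  have hI0 : ∀ i, ∫ x in Ω, pdR i (fun x => cutFun Ω ψ h K x * pdR i ψ x) x = 0 := by
    intro i
    rw [setIntegral_eq_integral_of_forall_compl_eq_zero, (hI i).2]
    intro x hx
    have : x ∉ tsupport (fun x => cutFun Ω ψ h K x * pdR i ψ x) := fun h' => hx ((hV i).2.2 h')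
    have h2 := notMem_tsupport_iff_eventuallyEq.1 this
    unfold pdR at h2 ⊢
    rw [h2.fderiv_eq]; simp
  have hdiv : ∀ i, ∀ x ∈ Ω, pdR i (fun x => cutFun Ω ψ h K x * pdR i ψ x) x
      = deriv K (ψ x / h) / h * pdR i ψ x ^ 2 + cutFun Ω ψ h K x * pdR i (pdR i ψ) x := by
    intro i x hx
    have h1 := hasFDerivAt_cut hΩo hψs (h := h) hK hx
    have h2 : HasFDerivAt (pdR i ψ) (fderiv ℝ (pdR i ψ) x) x :=
      (((hp i).contDiffAt (hΩo.mem_nhds hx)).differentiableAt (by simp)).hasFDerivAt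
    have h3 := (h1.mul h2).fderiv
    have h4 : pdR i (fun x => cutFun Ω ψ h K x * pdR i ψ x) x
      = (cutFun Ω ψ h K x • fderiv ℝ (pdR i ψ) x +
        pdR i ψ x • (deriv K (ψ x / h) / h) • fderiv ℝ ψ x) (EuclideanSpace.single i 1) :=
      congrArg (fun L : E2 →L[ℝ] ℝ => L (EuclideanSpace.single i 1)) h3
    rw [h4]
    simp only [add_apply, smul_apply, smul_eq_mul]
    change _ * pdR i (pdR i ψ) x + pdR i ψ x * (_ * pdR i ψ x) = _
    ring
  have hpd : ∀ i, ∀ x ∈ Ω, pdC i (fun x => (cutFun Ω ψ h φ x : ℂ)) x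
      = ((deriv φ (ψ x / h) / h * pdR i ψ x : ℝ) : ℂ) := by
    intro i x hx
    have h1 := hasFDerivAt_cut hΩo hψs (h := h) hφ hx
    have h2 := (Complex.ofRealCLM.hasFDerivAt.comp x h1).fderiv
    have h3 := congrArg (fun L : E2 →L[ℝ] ℂ => L (EuclideanSpace.single i 1)) h2
    refine Eq.trans h3 ?_
    simp [pdR]
  have hnorm : ∀ a A b : ℝ, ‖(h : ℂ) * (a : ℂ) - Complex.I * (A : ℂ) * (b : ℂ)‖ ^ 2
      = (h * a) ^ 2 + (A * b) ^ 2 := by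
    intro a A b
    rw [← Complex.normSq_eq_norm_sq, Complex.normSq_apply]
    simp
    ring
  have hint : ∀ x ∈ Ω,
      (‖(h : ℂ) * pdC 0 (fun x => (cutFun Ω ψ h φ x : ℂ)) x
          - Complex.I * ((-pdR 1 ψ x : ℝ) : ℂ) * (cutFun Ω ψ h φ x : ℂ)‖ ^ 2
        + ‖(h : ℂ) * pdC 1 (fun x => (cutFun Ω ψ h φ x : ℂ)) x
          - Complex.I * ((pdR 0 ψ x : ℝ) : ℂ) * (cutFun Ω ψ h φ x : ℂ)‖ ^ 2)
      = h * (cutFun Ω ψ h K x * B x)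
        - (h * pdR 0 (fun x => cutFun Ω ψ h K x * pdR 0 ψ x) x
        + h * pdR 1 (fun x => cutFun Ω ψ h K x * pdR 1 ψ x) x) := by
    intro x hx
    rw [hpd 0 x hx, hpd 1 x hx, hnorm, hnorm, hdiv 0 x hx, hdiv 1 x hx, ← hΔ x hx, hK']
    have : cutFun Ω ψ h φ x = φ (ψ x / h) := by simp [cutFun, hx]
    rw [this, lapl]
    field_simp
    ring
  unfold pauliQ
  rw [setIntegral_congr_fun hΩo.measurableSet hint]
  have e1 : ∀ x ∈ Ω, B x * ‖(cutFun Ω ψ h φ x : ℂ)‖ ^ 2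
      = cutFun Ω ψ h (fun τ => φ τ ^ 2) x * B x := by
    intro x hx
    simp [cutFun, hx]
    ring
  have i01 : IntegrableOn (fun x => h * pdR 0 (fun x => cutFun Ω ψ h K x * pdR 0 ψ x) x
      + h * pdR 1 (fun x => cutFun Ω ψ h K x * pdR 1 ψ x) x) Ω :=
    ((hI 0).1.integrableOn.const_mul h).add ((hI 1).1.integrableOn.const_mul h)
  rw [setIntegral_congr_fun hΩo.measurableSet e1, integral_sub (iKB.const_mul h) i01,
    integral_add ((hI 0).1.integrableOn.const_mul h) ((hI 1).1.integrableOn.const_mul h),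
    integral_const_mul, integral_const_mul, integral_const_mul, hI0, hI0, mul_zero, add_zero,
    sub_zero, ← mul_sub, ← integral_sub iKB iφB]
  refine mul_le_mul_of_nonneg_left ?_ hh.le
  rw [← integral_const_mul]
  refine setIntegral_mono_on (iKB.sub iφB) (hBi.const_mul M) hΩo.measurableSet fun x hx => ?_
  rw [← sub_mul]
  refine mul_le_mul_of_nonneg_right ?_ (hB0 x hx)
  simpa [cutFun, hx] using hM (ψ x / h)

/-! ### Taylor estimates at critical points -/

/-- Derivative of `f` in the direction `v`. -/
def dirD (v : E2) (f : E2 → ℝ) (x : E2) : ℝ := fderiv ℝ f x v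

lemma dirD_nice {f : E2 → ℝ} (hf : ContDiff ℝ (⊤ : ℕ∞) f) (hc : HasCompactSupport f) (v : E2) :
    ContDiff ℝ (⊤ : ℕ∞) (dirD v f) ∧ HasCompactSupport (dirD v f) :=
  ⟨(hf.fderiv_right (m := (⊤ : ℕ∞)) (by simp)).clm_apply contDiff_const,
    hc.fderiv_apply (𝕜 := ℝ) _⟩

lemma hasDerivAt_line {f : E2 → ℝ} (hf : ContDiff ℝ (⊤ : ℕ∞) f) (x v : E2) (t : ℝ) :
    HasDerivAt (fun t : ℝ => f (x + t • v)) (dirD v f (x + t • v)) t := by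
  have h1 : HasDerivAt (fun t : ℝ => x + t • v) v t := by
    simpa using ((hasDerivAt_id t).smul_const v).const_add x
  exact ((hf.differentiable (by simp)) (x + t • v)).hasFDerivAt.comp_hasDerivAt t h1

/-- Integrating a bound `|g'(t)| ≤ C |t|ⁿ` gains one power of `|t|`. -/
lemma pow_gain {g g' : ℝ → ℝ} (hg : ∀ t, HasDerivAt g (g' t) t) (h0 : g 0 = 0) {C : ℝ} {n : ℕ}
    (hC : 0 ≤ C) (hb : ∀ t, |g' t| ≤ C * |t| ^ n) (t : ℝ) : |g t| ≤ C * |t| ^ (n + 1) := by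
  have h := Convex.norm_image_sub_le_of_norm_hasDerivWithin_le (f := g) (f' := g')
    (s := Set.Icc (-|t|) |t|) (C := C * |t| ^ n) (x := 0) (y := t)
    (fun x _ => (hg x).hasDerivWithinAt)
    (fun x hx => (hb x).trans (by
      have : |x| ≤ |t| := abs_le.2 hx
      gcongr)) (convex_Icc _ _) (by simp) ⟨neg_abs_le t, le_abs_self t⟩
  simp only [h0, sub_zero, Real.norm_eq_abs] at h
  rw [pow_succ, ← mul_assoc]; exact h

/-- A cubic term bounded below by a quartic one near `0` vanishes. -/
lemma cubic_coeff_zero {a C : ℝ} (h : ∀ᶠ t in 𝓝 (0:ℝ), 0 ≤ a * t ^ 3 + C * |t| ^ 4) : a = 0 := by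
  apply le_antisymm
  · have h1 : ∀ᶠ t in 𝓝[<] (0:ℝ), 0 ≤ -a + C * (-t) := by
      filter_upwards [nhdsWithin_le_nhds h, self_mem_nhdsWithin] with t ht ht0
      have ht0' : t < 0 := ht0
      rw [abs_of_neg ht0'] at ht
      have h3 : 0 < (-t) ^ 3 := pow_pos (by linarith) 3
      refine le_of_mul_le_mul_left ?_ h3
      nlinarith
    have h2 : Tendsto (fun t : ℝ => -a + C * (-t)) (𝓝[<] 0) (𝓝 (-a + C * (-0))) :=
      ((by fun_prop : Continuous fun t : ℝ => -a + C * (-t)).tendsto 0).mono_left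
        nhdsWithin_le_nhds
    have := ge_of_tendsto h2 h1
    simp at this; exact this
  · have h1 : ∀ᶠ t in 𝓝[>] (0:ℝ), 0 ≤ a + C * t := by
      filter_upwards [nhdsWithin_le_nhds h, self_mem_nhdsWithin] with t ht ht0
      have ht0' : 0 < t := ht0
      rw [abs_of_pos ht0'] at ht
      have h3 : 0 < t ^ 3 := pow_pos ht0' 3
      refine le_of_mul_le_mul_left ?_ h3
      nlinarith
    have h2 : Tendsto (fun t : ℝ => a + C * t) (𝓝[>] 0) (𝓝 (a + C * 0)) :=
      ((by fun_prop : Continuous fun t : ℝ => a + C * t).tendsto 0).mono_left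
        nhdsWithin_le_nhds
    have := ge_of_tendsto h2 h1
    simpa using this

/-- Growth of `f` at a minimum with `v` in the kernel of the Hessian. Along `v` the third derivative
`a` vanishes too, by minimality, so `f` grows at most like `t⁴`; the first derivative in the
direction `w` is `O(t²)` along `v`, so the mixed term is at most a multiple of `|s| t²`, hence
of `s² + t⁴`. -/
lemma quartic_bound {f : E2 → ℝ} (hf : ContDiff ℝ (⊤ : ℕ∞) f) (hc : HasCompactSupport f)
    {x v w : E2} (hmin : IsLocalMin f x) (hvv : dirD v (dirD v f) x = 0)
    (hvw : dirD v (dirD w f) x = 0) :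
    ∃ C, 0 ≤ C ∧ ∀ s t : ℝ, f (x + t • v + s • w) ≤ f x + C * (s ^ 2 + t ^ 4) := by
  have hd : ∀ u, dirD u f x = 0 := fun u => by simp [dirD, hmin.fderiv_eq_zero]
  have bdd : ∀ {g : E2 → ℝ}, ContDiff ℝ (⊤ : ℕ∞) g → HasCompactSupport g →
      ∃ C, 0 ≤ C ∧ ∀ y, |g y| ≤ C := by
    intro g hg hgc
    obtain ⟨C, hC⟩ := hgc.exists_bound_of_continuous hg.continuous
    exact ⟨C, (norm_nonneg _).trans (hC x), hC⟩
  have n1 := dirD_nice hf hc v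
  have n2 := dirD_nice n1.1 n1.2 v
  have n3 := dirD_nice n2.1 n2.2 v
  have n4 := dirD_nice n3.1 n3.2 v
  have m1 := dirD_nice hf hc w
  have m2 := dirD_nice m1.1 m1.2 v
  have m3 := dirD_nice m2.1 m2.2 v
  have q2 := dirD_nice m1.1 m1.2 w
  obtain ⟨C1, hC1, b1⟩ := bdd n4.1 n4.2
  obtain ⟨C2, hC2, b2⟩ := bdd m3.1 m3.2
  obtain ⟨C3, hC3, b3⟩ := bdd q2.1 q2.2
  set a := dirD v (dirD v (dirD v f)) x with ha
  have e3 := pow_gain (n := 0) (g := fun t => dirD v (dirD v (dirD v f)) (x + t • v) - a)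
    (fun t => (hasDerivAt_line n3.1 x v t).sub_const a) (by simp [ha]) hC1
    (fun t => by simpa using b1 _)
  have e2 := pow_gain (n := 1) (g := fun t => dirD v (dirD v f) (x + t • v) - a * t)
    (fun t => ((hasDerivAt_line n2.1 x v t).sub ((hasDerivAt_id t).const_mul a)).congr_deriv
      (by simp)) (by simp [hvv]) hC1 e3
  have e1 := pow_gain (n := 2) (g := fun t => dirD v f (x + t • v) - a * (t ^ 2 / 2))
    (fun t => ((hasDerivAt_line n1.1 x v t).sub
      (((hasDerivAt_pow 2 t).div_const 2).const_mul a)).congr_deriv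
      (by simp)) (by simp [hd]) hC1 e2
  have e0 := pow_gain (n := 3) (g := fun t => f (x + t • v) - f x - a * (t ^ 3 / 6))
    (fun t => (((hasDerivAt_line hf x v t).sub_const (f x)).sub
      (((hasDerivAt_pow 3 t).div_const 6).const_mul a)).congr_deriv
      (by push_cast; ring)) (by simp) hC1 e1
  have ha0 : a = 0 := by
    have htend : Tendsto (fun t : ℝ => x + t • v) (𝓝 0) (𝓝 x) := by
      have : Continuous fun t : ℝ => x + t • v := by fun_prop
      simpa using this.tendsto 0
    have : a / 6 = 0 := by
      refine cubic_coeff_zero (C := C1) ?_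
      filter_upwards [htend.eventually hmin] with t ht
      have := (abs_le.1 (e0 t)).2
      norm_num at this
      linarith
    linarith
  have k1 := pow_gain (n := 0) (g := fun t => dirD v (dirD w f) (x + t • v))
    (fun t => hasDerivAt_line m2.1 x v t) (by simp [hvw]) hC2
    (fun t => by simpa using b2 _)
  have k0 := pow_gain (n := 1) (g := fun t => dirD w f (x + t • v))
    (fun t => hasDerivAt_line m1.1 x v t) (by simp [hd]) hC2 k1
  refine ⟨C1 + C2 + C3, by positivity, fun s t => ?_⟩
  have r1 := pow_gain (n := 0)
    (g := fun s => dirD w f (x + t • v + s • w) - dirD w f (x + t • v))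
    (fun s => (hasDerivAt_line m1.1 (x + t • v) w s).sub_const _) (by simp) hC3
    (fun s => by simpa using b3 _)
  have r0 := pow_gain (n := 1)
    (g := fun s => f (x + t • v + s • w) - f (x + t • v) - dirD w f (x + t • v) * s)
    (fun s => (((hasDerivAt_line hf (x + t • v) w s).sub_const _).sub
      ((hasDerivAt_id s).const_mul _)).congr_deriv (by simp)) (by simp) hC3 r1
  have A := (abs_le.1 (r0 s)).2
  have B := (abs_le.1 (e0 t)).2
  have D := k0 t
  simp only [ha0, zero_mul, sub_zero] at B
  have hs2 : |s| ^ 2 = s ^ 2 := sq_abs s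
  have ht2 : |t| ^ 2 = t ^ 2 := sq_abs t
  have ht4 : |t| ^ 4 = t ^ 4 := by rw [show 4 = 2 * 2 from rfl, pow_mul, ht2, ← pow_mul]
  norm_num only at A B D
  rw [hs2] at A
  rw [ht4] at B
  rw [ht2] at D
  have E : dirD w f (x + t • v) * s ≤ C2 * (s ^ 2 + t ^ 4) := by
    calc dirD w f (x + t • v) * s ≤ |dirD w f (x + t • v)| * |s| := by
          rw [← abs_mul]; exact le_abs_self _
      _ ≤ C2 * t ^ 2 * |s| := by gcongr
      _ ≤ C2 * (s ^ 2 + t ^ 4) := by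
          rw [mul_assoc]
          gcongr
          nlinarith [sq_nonneg (t ^ 2 - |s|), sq_nonneg t, hs2, sq_nonneg s, sq_nonneg (t^2)]
  have F1 := mul_nonneg hC1 (sq_nonneg s)
  have F3 := mul_nonneg hC3 (sq_nonneg (t ^ 2))
  nlinarith

/-- At a local maximum with positive second derivative along `v`, the restriction to that line would
also have a local minimum, hence be locally constant. -/
lemma second_deriv_nonpos {f : E2 → ℝ} (hf : ContDiff ℝ (⊤ : ℕ∞) f) (hc : HasCompactSupport f)
    {x : E2} (v : E2) (hmax : IsLocalMax f x) : dirD v (dirD v f) x ≤ 0 := by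
  by_contra hpos
  push Not at hpos
  have n1 := dirD_nice hf hc v
  set g : ℝ → ℝ := fun t => f (x + t • v) with hg
  have d1 : deriv g = fun t => dirD v f (x + t • v) :=
    funext fun t => (hasDerivAt_line hf x v t).deriv
  have d2 : deriv (deriv g) 0 = dirD v (dirD v f) x := by
    rw [d1]; simpa using (hasDerivAt_line n1.1 x v 0).deriv
  have hd0 : deriv g 0 = 0 := by rw [d1]; simp [dirD, hmax.fderiv_eq_zero]
  have hlm := isLocalMin_of_deriv_deriv_pos (f := g) (x₀ := 0) (by rw [d2]; exact hpos) hd0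
    (hasDerivAt_line hf x v 0).continuousAt
  have htend : Tendsto (fun t : ℝ => x + t • v) (𝓝 0) (𝓝 x) := by
    have : Continuous fun t : ℝ => x + t • v := by fun_prop
    simpa using this.tendsto 0
  have hconst : g =ᶠ[𝓝 0] fun _ => g 0 := by
    filter_upwards [hlm, htend.eventually hmax] with t h1 h2
    refine le_antisymm ?_ h1
    simpa [hg] using h2
  have : deriv (deriv g) 0 = 0 := by
    rw [hconst.deriv.deriv_eq]; simp
  linarith [d2 ▸ this]

/-! ### Localization and the kernel of the Hessian -/

/-- A compactly supported smooth function with the same germ as `ψ` at `x`; its derivatives are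
globally bounded, as the Taylor estimates require. -/
lemma exists_localization {Ω : Set E2} (hΩo : IsOpen Ω) {ψ : E2 → ℝ}
    (hψs : ContDiffOn ℝ (⊤ : ℕ∞) ψ Ω) {x : E2} (hx : x ∈ Ω) :
    ∃ f : E2 → ℝ, ContDiff ℝ (⊤ : ℕ∞) f ∧ HasCompactSupport f ∧ f =ᶠ[𝓝 x] ψ := by
  obtain ⟨r, hr, hrΩ⟩ := Metric.isOpen_iff.1 hΩo x hx
  let χ : ContDiffBump x := ⟨r / 4, r / 2, by linarith, by linarith⟩
  have hts : tsupport (fun y => χ y * ψ y) ⊆ Ω := by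
    refine (tsupport_mul_subset_left (f := χ) (g := ψ)).trans ?_
    rw [χ.tsupport_eq]
    exact (Metric.closedBall_subset_ball (by change r / 2 < r; linarith)).trans hrΩ
  refine ⟨fun y => χ y * ψ y, contDiff_of_tsupport_pt fun y hy => ?_,
    χ.hasCompactSupport.mul_right, ?_⟩
  · exact χ.contDiff.contDiffAt.mul (hψs.contDiffAt (hΩo.mem_nhds (hts hy)))
  · filter_upwards [χ.eventuallyEq_one] with y hy
    simp [hy]

lemma dirD_congr {f g : E2 → ℝ} {x : E2} (h : f =ᶠ[𝓝 x] g) (v : E2) :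
    dirD v f =ᶠ[𝓝 x] dirD v g := by
  filter_upwards [h.fderiv (𝕜 := ℝ)] with y hy
  simp [dirD, hy]

lemma dirD_expand (v : E2) (f : E2 → ℝ) (x : E2) :
    dirD v f x = v 0 * pdR 0 f x + v 1 * pdR 1 f x := by
  have hv : v = v 0 • EuclideanSpace.single 0 1 + v 1 • EuclideanSpace.single 1 1 := by
    ext i; fin_cases i <;> simp
  unfold dirD pdR
  conv_lhs => rw [hv]
  simp

/-- If `v` annihilates the Hessian from the left, all mixed second derivatives along `v` vanish; no
symmetry of second derivatives is needed. -/
lemma dirD_dirD_eq_zero {f : E2 → ℝ} (hf : ContDiff ℝ (⊤ : ℕ∞) f) (hc : HasCompactSupport f)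
    {x v : E2} (h : ∀ j, dirD v (pdR j f) x = 0) (w : E2) : dirD v (dirD w f) x = 0 := by
  have hd : ∀ j, DifferentiableAt ℝ (pdR j f) x := fun j =>
    (dirD_nice hf hc (EuclideanSpace.single j 1)).1.differentiable (by simp) x
  have e : dirD w f = fun y => w 0 * pdR 0 f y + w 1 * pdR 1 f y :=
    funext fun y => dirD_expand w f y
  have h1 := (((hd 0).hasFDerivAt.const_mul (w 0)).add
    ((hd 1).hasFDerivAt.const_mul (w 1))).fderiv
  have h2 := congrArg (fun L : E2 →L[ℝ] ℝ => L v) h1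
  rw [e]
  refine Eq.trans h2 ?_
  have h3 := h 0
  have h4 := h 1
  unfold dirD at h3 h4
  simp [h3, h4]

/-! ### Maximum principle for of `ψ` -/

lemma not_isLocalMax {Ω : Set E2} (hΩo : IsOpen Ω) {B ψ : E2 → ℝ}
    (hψs : ContDiffOn ℝ (⊤ : ℕ∞) ψ Ω) (hB : ∀ x ∈ Ω, 0 < B x)
    (hΔ : ∀ x ∈ Ω, lapl ψ x = B x) {x : E2} (hx : x ∈ Ω) : ¬ IsLocalMax ψ x := by
  intro hmax
  obtain ⟨f, hf, hfc, hfe⟩ := exists_localization hΩo hψs hx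
  have hfm : IsLocalMax f x := by
    filter_upwards [hmax, hfe] with y h1 h2
    rw [h2, hfe.eq_of_nhds]; exact h1
  have h2 : ∀ i, pdR i (pdR i ψ) x ≤ 0 := fun i => by
    have := second_deriv_nonpos hf hfc (EuclideanSpace.single i 1) hfm
    rwa [(dirD_congr (dirD_congr hfe _) _).eq_of_nhds] at this
  have h3 := hΔ x hx
  have h4 := hB x hx
  unfold lapl at h3
  linarith [h2 0, h2 1]

/-- Maximum principle: `Δψ > 0` excludes interior maxima, so `ψ` lies strictly below its boundary
value `0`. -/
lemma min_neg {Ω : Set E2} (hΩo : IsOpen Ω) (hΩb : Bornology.IsBounded Ω) {B ψ : E2 → ℝ}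
    (hψc : ContinuousOn ψ (closure Ω)) (hψs : ContDiffOn ℝ (⊤ : ℕ∞) ψ Ω)
    (hB : ∀ x ∈ Ω, 0 < B x) (hΔ : ∀ x ∈ Ω, lapl ψ x = B x)
    (hbd : ∀ x ∈ frontier Ω, ψ x = 0) {x : E2} (hx : x ∈ Ω) : ψ x < 0 := by
  obtain ⟨z, hz, hzm⟩ := hΩb.isCompact_closure.exists_isMaxOn ⟨x, subset_closure hx⟩ hψc
  have key : ∀ y ∈ Ω, (∀ t ∈ Ω, ψ t ≤ ψ y) → False := fun y hy h =>
    not_isLocalMax hΩo hψs hB hΔ hy (by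
      filter_upwards [hΩo.mem_nhds hy] with t ht using h t ht)
  have hzf : ψ z = 0 := by
    refine hbd z ⟨hz, fun hz' => ?_⟩
    rw [hΩo.interior_eq] at hz'
    exact key z hz' fun t ht => hzm (subset_closure ht)
  by_contra hx0
  push Not at hx0
  refine key x hx fun t ht => ?_
  have : ψ t ≤ ψ z := hzm (subset_closure ht)
  linarith

/-! ### The parallelogram at the degenerate minimum -/

/-- The parallelogram with corner `x` spanned by `b • v` and `a • w`. -/
def para (x v w : E2) (a b : ℝ) : Set E2 :=
  {y | ∃ s t : ℝ, 0 ≤ s ∧ s ≤ a ∧ 0 ≤ t ∧ t ≤ b ∧ y = x + t • v + s • w}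

lemma para_volume {v w : E2} (hvw : ∀ s t : ℝ, t • v + s • w = 0 → s = 0 ∧ t = 0) :
    ∃ δ > 0, ∀ (x : E2) (a b : ℝ), 0 ≤ a → 0 ≤ b →
      MeasurableSet (para x v w a b) ∧ volume (para x v w a b) ≠ ⊤ ∧
      volume.real (para x v w a b) = δ * (a * b) := by
  let L : E2 →ₗ[ℝ] E2 :=
    (EuclideanSpace.proj (𝕜 := ℝ) (0 : Fin 2)).toLinearMap.smulRight w +
    (EuclideanSpace.proj (𝕜 := ℝ) (1 : Fin 2)).toLinearMap.smulRight v
  have hL : ∀ p : E2, L p = p 0 • w + p 1 • v := fun p => by simp [L]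
  have hinj : Function.Injective L := by
    rw [← LinearMap.ker_eq_bot, LinearMap.ker_eq_bot']
    intro p hp
    rw [hL, add_comm] at hp
    obtain ⟨h0, h1⟩ := hvw _ _ hp
    ext i; fin_cases i <;> simp [h0, h1]
  have hdet : LinearMap.det L ≠ 0 := by
    have := (LinearEquiv.ofInjectiveEndo L hinj).isUnit_det'
    have e : ((LinearEquiv.ofInjectiveEndo L hinj : E2 ≃ₗ[ℝ] E2) : E2 →ₗ[ℝ] E2) = L := by
      ext p; simp
    rw [e] at this
    exact this.ne_zero
  refine ⟨|LinearMap.det L|, abs_pos.2 hdet, fun x a b ha hb => ?_⟩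
  set R : Set (Fin 2 → ℝ) := Set.Icc 0 ![a, b] with hR
  have hP : para x v w a b = (fun y => x + y) '' (L '' (WithLp.ofLp ⁻¹' R)) := by
    ext y
    simp only [para, Set.mem_ofPred_eq, Set.mem_image, exists_exists_and_eq_and]
    constructor
    · rintro ⟨s, t, h1, h2, h3, h4, rfl⟩
      refine ⟨!₂[s, t], ⟨?_, ?_⟩, ?_⟩
      · intro i; fin_cases i <;> simpa
      · intro i; fin_cases i <;> simpa
      · rw [hL]; simp only [Matrix.cons_val_zero, Matrix.cons_val_one]
        abel
    · rintro ⟨p, ⟨h1, h2⟩, rfl⟩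
      refine ⟨p 0, p 1, h1 0, by simpa using h2 0, h1 1, by simpa using h2 1, ?_⟩
      rw [hL]; abel
  have hRc : IsCompact ((WithLp.ofLp : E2 → _) ⁻¹' R) := by
    have := (PiLp.continuousLinearEquiv 2 ℝ (fun _ : Fin 2 => ℝ)).toHomeomorph.isCompact_preimage
      (s := R)
    exact this.2 isCompact_Icc
  have hPc : IsCompact (para x v w a b) := by
    rw [hP]
    exact (hRc.image (LinearMap.continuous_of_finiteDimensional L)).image (by fun_prop)
  refine ⟨hPc.measurableSet, hPc.measure_lt_top.ne, ?_⟩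
  have hvol : volume (para x v w a b)
      = ENNReal.ofReal |LinearMap.det L| * (ENNReal.ofReal a * ENNReal.ofReal b) := by
    rw [hP, Set.image_add_left, measure_preimage_add, Measure.addHaar_image_linearMap,
      (PiLp.volume_preserving_ofLp (Fin 2)).measure_preimage measurableSet_Icc.nullMeasurableSet,
      Real.volume_Icc_pi]
    simp
  rw [measureReal_def, hvol]
  simp [ENNReal.toReal_ofReal, ha, hb]

/-- upper bound in the degenerate case. If `ψ` attains its minimum at a point
with degenerate Hessian, then `λ_{P₋}(h) ≤ C h^{1/4} exp(2ψ_min/h)` for small `h`. -/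
theorem stmt7 (Ω : Set E2) (hΩo : IsOpen Ω) (hΩne : Ω.Nonempty)
    (hΩb : Bornology.IsBounded Ω)
    (hsc : SimplyConnectedSpace Ω)
    (hsb : HasSmoothBoundary Ω)
    (U : Set E2) (hU : IsOpen U) (hclU : closure Ω ⊆ U)
    (B ψ : E2 → ℝ)
    (hBsm : ContDiffOn ℝ (⊤ : ℕ∞) B U) (hBpos : ∀ x ∈ closure Ω, 0 < B x)
    (hψsm : ContDiffOn ℝ (⊤ : ℕ∞) ψ U)
    (hΔ : ∀ x ∈ Ω, lapl ψ x = B x)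
    (hbd : ∀ x ∈ frontier Ω, ψ x = 0)
    (x₀ : E2) (hx₀ : x₀ ∈ Ω) (hx₀min : ψ x₀ = sInf (ψ '' Ω))
    (hdeg : (hess ψ x₀).det = 0) :
    ∃ C > 0, ∃ h₀ > 0, ∀ h : ℝ, 0 < h → h < h₀ →
      lambdaP Ω (fun x => -pdR 1 ψ x) (fun x => pdR 0 ψ x) B h
        ≤ C * h ^ ((1:ℝ)/4) * Real.exp (2 * sInf (ψ '' Ω) / h) := by
  have hΩU : Ω ⊆ U := subset_closure.trans hclU
  have hψs : ContDiffOn ℝ (⊤ : ℕ∞) ψ Ω := hψsm.mono hΩU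
  have hBs : ContDiffOn ℝ (⊤ : ℕ∞) B Ω := hBsm.mono hΩU
  have hψc : ContinuousOn ψ (closure Ω) := hψsm.continuousOn.mono hclU
  have hΩk : IsCompact (closure Ω) := hΩb.isCompact_closure
  have hBp : ∀ x ∈ Ω, 0 < B x := fun x hx => hBpos x (subset_closure hx)
  have hBi : IntegrableOn B Ω :=
    ((hBsm.continuousOn.mono hclU).integrableOn_compact hΩk).mono_set subset_closure
  set m := sInf (ψ '' Ω) with hm
  have hmneg : m < 0 := hx₀min ▸ min_neg hΩo hΩb hψc hψs hBp hΔ hbd hx₀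
  have hmle : ∀ x ∈ Ω, m ≤ ψ x := fun x hx =>
    csInf_le ((hΩk.bddBelow_image hψc).mono (Set.image_mono subset_closure))
      (Set.mem_image_of_mem _ hx)
  -- A kernel vector `v` of the Hessian, and `w`, its rotation by a right angle.
  obtain ⟨v', hv'0, hv'⟩ := Matrix.exists_vecMul_eq_zero_iff.2 hdeg
  set v : E2 := WithLp.toLp 2 v' with hv
  set w : E2 := !₂[-v' 1, v' 0] with hw
  obtain ⟨f, hf, hfc, hfe⟩ := exists_localization hΩo hψs hx₀
  have hfx : f x₀ = m := hfe.eq_of_nhds.trans hx₀min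
  have hfmin : IsLocalMin f x₀ := by
    filter_upwards [hfe, hΩo.mem_nhds hx₀] with y h1 h2
    rw [hfx, h1]; exact hmle y h2
  have hvj : ∀ j, dirD v (pdR j f) x₀ = 0 := by
    intro j
    have h1 := congrFun hv' j
    simp only [Matrix.vecMul, dotProduct, Fin.sum_univ_two, hess, Matrix.of_apply,
      Pi.zero_apply] at h1
    have h2 : dirD v (pdR j f) x₀ = dirD v (pdR j ψ) x₀ :=
      (dirD_congr (dirD_congr hfe (EuclideanSpace.single j 1)) v).eq_of_nhds
    rw [h2, dirD_expand]
    exact h1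
  obtain ⟨C, hC, hfC⟩ := quartic_bound hf hfc (v := v) (w := w) hfmin
    (dirD_dirD_eq_zero hf hfc hvj v) (dirD_dirD_eq_zero hf hfc hvj w)
  have hind : ∀ s t : ℝ, t • v + s • w = 0 → s = 0 ∧ t = 0 := by
    intro s t hst
    have h0 := congrFun (congrArg WithLp.ofLp hst) 0
    have h1 := congrFun (congrArg WithLp.ofLp hst) 1
    simp [hv, hw] at h0 h1
    have hpos : v' 0 ^ 2 + v' 1 ^ 2 ≠ 0 := by
      intro h
      apply hv'0
      have a0 : v' 0 = 0 := by nlinarith [sq_nonneg (v' 0), sq_nonneg (v' 1)]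
      have a1 : v' 1 = 0 := by nlinarith [sq_nonneg (v' 0), sq_nonneg (v' 1)]
      ext i; fin_cases i <;> simp [a0, a1]
    constructor
    · refine (mul_eq_zero.1 (?_ : s * (v' 0 ^ 2 + v' 1 ^ 2) = 0)).resolve_right hpos
      linear_combination v' 0 * h1 - v' 1 * h0
    · refine (mul_eq_zero.1 (?_ : t * (v' 0 ^ 2 + v' 1 ^ 2) = 0)).resolve_right hpos
      linear_combination v' 0 * h0 + v' 1 * h1
  obtain ⟨δ, hδ, hpara⟩ := para_volume hind
  obtain ⟨ε, hε, hball⟩ := Metric.eventually_nhds_iff_ball.1 (hfe.and (hΩo.mem_nhds hx₀))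
  obtain ⟨φ, K, M, hM0, hφ, hK, hφ0, hK0, hK', hφe, hM⟩ := exists_profile
  set β := ∫ x in Ω, B x with hβ
  have hβ0 : 0 ≤ β := setIntegral_nonneg hΩo.measurableSet fun x hx => (hBp x hx).le
  -- For `b = h ^ (1/4) < η` the parallelogram with sides `b • v` and `b ^ 2 • w` lies in the
  -- `ε`-ball around `x₀`.
  set η : ℝ := min 1 (ε / (‖v‖ + ‖w‖ + 1)) with hη
  have hη0 : 0 < η := by positivity
  set D : ℝ := M * β * Real.exp (4 * C) / δ + 1 with hD
  have hD0 : 0 < D := by positivity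
  refine ⟨D, hD0, min (η ^ 4) (-m / (2 * C + 2)),
    lt_min (by positivity) (div_pos (by linarith) (by linarith)), fun h hh hh0 => ?_⟩
  have hh1 : h < η ^ 4 := hh0.trans_le (min_le_left _ _)
  have hh2 : h * (2 * C + 2) < -m := by
    rw [← lt_div_iff₀ (by linarith)]; exact hh0.trans_le (min_le_right _ _)
  set b : ℝ := h ^ ((1:ℝ)/4) with hb
  have hb0 : 0 < b := Real.rpow_pos_of_pos hh _
  have hb4 : b ^ 4 = h := by
    rw [hb, ← Real.rpow_natCast, ← Real.rpow_mul hh.le]; norm_num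
  have hbη : b < η := lt_of_pow_lt_pow_left₀ 4 hη0.le (hb4 ▸ hh1)
  have hb1 : b < 1 := hbη.trans_le (min_le_left _ _)
  have hbε : b * (‖v‖ + ‖w‖ + 1) < ε := by
    rw [← lt_div_iff₀ (by positivity)]; exact hbη.trans_le (min_le_right _ _)
  set P := para x₀ v w (b ^ 2) b with hPdef
  obtain ⟨hPm, hPf, hPv⟩ := hpara x₀ (b ^ 2) b (by positivity) hb0.le
  have hPball : ∀ y ∈ P, y ∈ Ω ∧ ψ y ≤ m + 2 * C * h := by
    rintro y ⟨s, t, hs0, hs, ht0, ht, rfl⟩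
    have hsb : s ≤ b := hs.trans (by nlinarith)
    have hmem : x₀ + t • v + s • w ∈ Metric.ball x₀ ε := by
      rw [Metric.mem_ball, dist_eq_norm, add_assoc, add_sub_cancel_left]
      calc ‖t • v + s • w‖ ≤ ‖t • v‖ + ‖s • w‖ := norm_add_le _ _
        _ = t * ‖v‖ + s * ‖w‖ := by
            rw [norm_smul, norm_smul, Real.norm_of_nonneg hs0, Real.norm_of_nonneg ht0]
        _ ≤ b * ‖v‖ + b * ‖w‖ := by gcongr
        _ ≤ b * (‖v‖ + ‖w‖ + 1) := by nlinarith
        _ < ε := hbε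
    obtain ⟨h1, h2⟩ := hball _ hmem
    refine ⟨h2, ?_⟩
    rw [← h1]
    refine (hfC s t).trans ?_
    rw [hfx]
    have hs2 : s ^ 2 ≤ h := by
      calc s ^ 2 ≤ (b ^ 2) ^ 2 := by gcongr
        _ = h := by rw [← hb4]; ring
    have ht4 : t ^ 4 ≤ h := by
      calc t ^ 4 ≤ b ^ 4 := by gcongr
        _ = h := hb4
    nlinarith
  have hPΩ : P ⊆ Ω := fun y hy => (hPball y hy).1
  set u : E2 → ℂ := fun x => (cutFun Ω ψ h φ x : ℂ) with hu
  have hcut := smooth_cut_mul hΩo hΩb hψc hψs hbd hh hφ hφ0 (g := fun _ => 1) contDiffOn_const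
  simp only [mul_one] at hcut
  have hus : IsCptSmoothIn Ω u := by
    refine ⟨Complex.ofRealCLM.contDiff.comp hcut.1,
      hcut.2.1.comp_left (g := fun r : ℝ => (r : ℂ)) (by simp), ?_⟩
    exact (closure_mono (Function.support_comp_subset (g := fun r : ℝ => (r : ℂ)) (by simp)
      (cutFun Ω ψ h φ))).trans hcut.2.2
  have hlow : ∀ y ∈ P, Real.exp (-(2 * m / h) - 4 * C) ≤ ‖u y‖ ^ 2 := by
    intro y hy
    obtain ⟨hyΩ, hyψ⟩ := hPball y hy
    have h1 : ψ y / h ≤ -2 := by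
      rw [div_le_iff₀ hh]; linarith
    have h2 : u y = (Real.exp (-(ψ y / h)) : ℂ) := by
      simp [hu, cutFun, hyΩ, hφe _ h1]
    rw [h2, Complex.norm_real, Real.norm_of_nonneg (Real.exp_nonneg _),
      ← Real.exp_nat_mul]
    apply Real.exp_le_exp.2
    have h3 : ψ y / h ≤ m / h + 2 * C := by
      rw [div_le_iff₀ hh, add_mul, div_mul_cancel₀ _ hh.ne']; exact hyψ
    push_cast
    rw [mul_div_assoc]
    linarith
  have hui : Integrable (fun x => ‖u x‖ ^ 2) := by
    refine Continuous.integrable_of_hasCompactSupport (hus.1.continuous.norm.pow 2) ?_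
    exact hus.2.1.comp_left (g := fun z : ℂ => ‖z‖ ^ 2) (by simp)
  set d : ℝ := Real.exp (-(2 * m / h) - 4 * C) * (δ * (b ^ 2 * b)) with hd
  have hd0 : 0 < d := by positivity
  have hden : d ≤ ∫ x in Ω, ‖u x‖ ^ 2 := by
    rw [hd, ← hPv]
    exact (setIntegral_ge_of_const_le_real hPm hPf hlow hui.integrableOn).trans
      (setIntegral_mono_set hui.integrableOn (Eventually.of_forall fun _ => by positivity)
        hPΩ.eventuallyLE)
  have hu0 : u ≠ 0 := by
    intro h0
    have : (∫ x in Ω, ‖u x‖ ^ 2) = 0 := by simp [h0]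
    linarith
  have hQ := pauli_cut_le hΩo hΩb hψc hψs hBs (fun x hx => (hBp x hx).le) hBi hΔ hbd hh
    hφ hK hφ0 hK0 hK' hM
  rw [lambdaP]
  -- `sInf` of a set of reals that is not bounded below is `0`.
  by_cases hbb : BddBelow { r | ∃ u : E2 → ℂ, IsCptSmoothIn Ω u ∧ u ≠ 0 ∧
    r = pauliQ Ω (fun x => -pdR 1 ψ x) (fun x => pdR 0 ψ x) B h u / ∫ x in Ω, ‖u x‖ ^ 2 }
  swap
  · rw [Real.sInf_of_not_bddBelow hbb]; positivity
  refine (csInf_le hbb ⟨u, hus, hu0, rfl⟩).trans ?_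
  calc pauliQ Ω (fun x => -pdR 1 ψ x) (fun x => pdR 0 ψ x) B h u / ∫ x in Ω, ‖u x‖ ^ 2
      ≤ (h * (M * β)) / ∫ x in Ω, ‖u x‖ ^ 2 :=
        div_le_div_of_nonneg_right hQ (hd0.le.trans hden)
    _ ≤ (h * (M * β)) / d := by gcongr
    _ = M * β * Real.exp (4 * C) / δ * b * Real.exp (2 * m / h) := by
        rw [hd, Real.exp_sub, Real.exp_neg, ← hb4]
        field_simp
    _ ≤ D * b * Real.exp (2 * m / h) := by
        gcongr; linarith
end
end

section
/- Let R > 0 and B > 0, let Ω = {x ∈ ℝ² : |x| < R} be the open disk of radius R, and let A(x) = (−Bx₂/2, Bx₁/2), so that the magnetic field is constant equal to B. Then there exist constants C > 0 and h₀ > 0 such that for all 0 < h < h₀ the lowest Dirichlet Pauli eigenvalue satisfies |λ_{P₋}(h) − B²R² e^{−BR²/(2h)}| ≤ C h B²R² e^{−BR²/(2h)}; in particular λ_{P₋}(h) = B²R² e^{−BR²/(2h)}(1 + O(h)) as h → 0⁺. -/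
/-!
Write `T = BR²/(2h)`. The two inequalities are proved separately.

*Lower bound.* In polar coordinates, with `y` the `m`-th angular Fourier coefficient of `u`, Parseval
splits `∫ |(h∇ - iA)u|²` into the one-dimensional forms
`∫ (r h²|y'|² + (hm - Br²/2)²|y|²/r) dr` (`lintegral_polar_parseval`, `kinDens_polar`). It suffices to
bound each of them below by `(hB + Λ) ∫ r|y|² dr` (`mode_ineq`). For `m < 0` this is true pointwise
as soon as `Λ ≤ h²/R²` (`mode_neg`). For `m ≥ 0` one uses the torsion function
`F(r) = ∫_r^R (e^{Bs²/2h} - 1)/s ds`, a supersolution: completing the square shows that the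
difference of the integrands dominates an exact derivative as soon as `Λ F(0) ≤ hB`
(`mode_algebra`, `mode_nonneg`). Since `F(0) ≤ e^T/(2T) (1 + 128/T)` (`torsK_integral_le`), the value
`Λ = B²R²e^{-T}/(1 + 128/T)` is admissible for `T ≥ 24`.

*Upper bound.* The trial function is `u = e^{-B|x|²/4h} W(|x|²)`, where `W(t)` is `1 - e^{B(t-R²)/2h}`
smoothly cut off near `t = R²` at height of order `h` (`trialU`). Up to an exact derivative, the form
is `∫ 4h² r³ W'(r²)² e^{-Br²/2h} dr`, which does not exceed `hBR²e^{-T}`, while the corresponding norm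
is at least `(h/B) D` with `D = (1 - 4h)(1 - e^{-T}) - 2Te^{-T}` (`trial_bound`). Both bounds are
`B²R²e^{-T}(1 + O(h))`.
-/

open MeasureTheory Filter Topology

noncomputable section

/-! ### The torsion kernel -/

/-- The continuous extension to `s = 0` of `(e^{b s²} - 1) / s`. -/
def torsK (b : ℝ) : ℝ → ℝ := dslope (fun s : ℝ => Real.exp (b * s ^ 2)) 0

theorem hasDerivAt_exp_sq (b s : ℝ) :
    HasDerivAt (fun s : ℝ => Real.exp (b * s ^ 2)) (2 * b * s * Real.exp (b * s ^ 2)) s := by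
  have h := ((hasDerivAt_pow 2 s).const_mul b).exp
  convert h using 1
  norm_num
  ring

theorem torsK_continuous (b : ℝ) : Continuous (torsK b) := by
  have h := (continuousOn_dslope (f := fun s : ℝ => Real.exp (b * s ^ 2)) (a := 0)
    (s := Set.univ) Filter.univ_mem).2
    ⟨by fun_prop, (hasDerivAt_exp_sq b 0).differentiableAt⟩
  rw [continuousOn_univ] at h
  exact h

theorem torsK_of_ne (b : ℝ) {s : ℝ} (hs : s ≠ 0) :
    torsK b s = (Real.exp (b * s ^ 2) - 1) / s := by
  rw [torsK, dslope_of_ne _ hs, slope_def_field]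
  simp

theorem torsK_pos {b : ℝ} (hb : 0 < b) {s : ℝ} (hs : 0 < s) : 0 < torsK b s := by
  rw [torsK_of_ne b hs.ne']
  have : 1 < Real.exp (b * s ^ 2) := Real.one_lt_exp_iff.2 (by positivity)
  exact div_pos (by linarith) hs

/-- The pointwise comparison behind `torsK_integral_le`: after multiplication by `e^x / 2`, the right
side is the `x`-derivative of `e^x (1/(x+8) + 128/(x+8)²) / 2`. -/
theorem exp_primitive_ineq {x : ℝ} (hx : 0 < x) :
    (1 - Real.exp (-x)) / x ≤ 1 / (x + 8) + 127 / (x + 8) ^ 2 - 256 / (x + 8) ^ 3 := by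
  have e : 1 / (x + 8) + 127 / (x + 8) ^ 2 - 256 / (x + 8) ^ 3
      = ((x + 8) ^ 2 + 127 * (x + 8) - 256) / (x + 8) ^ 3 := by
    field_simp
  rw [e, div_le_div_iff₀ hx (by positivity)]
  rcases le_total x 1 with h1 | h1
  · have h2 : 1 - Real.exp (-x) ≤ x := by
      have := Real.add_one_le_exp (-x); linarith
    have h3 : (x + 8) ^ 3 ≤ (x + 8) ^ 2 + 127 * (x + 8) - 256 := by
      nlinarith [mul_nonneg hx.le (sub_nonneg.2 h1), mul_nonneg (mul_nonneg hx.le hx.le) (sub_nonneg.2 h1)]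
    calc _ ≤ x * (x + 8) ^ 3 := by gcongr
      _ ≤ x * ((x + 8) ^ 2 + 127 * (x + 8) - 256) := by gcongr
      _ = _ := by ring
  · have h2 : 1 - Real.exp (-x) ≤ 1 := by linarith [Real.exp_pos (-x)]
    calc _ ≤ 1 * (x + 8) ^ 3 := by gcongr
      _ ≤ _ := by nlinarith [mul_nonneg (sub_nonneg.2 h1) (sub_nonneg.2 h1)]

/-- An explicit primitive dominating `torsK` gives `∫₀ᴿ (e^{bs²}-1)/s ds ≤ e^T/(2T) (1 + 128/T)`
with `T = bR²`. The shift by `8` in the comparison function tames it near `s = 0`. -/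
theorem torsK_integral_le {b R : ℝ} (hb : 0 < b) (hR : 0 < R) :
    ∫ s in (0 : ℝ)..R, torsK b s
      ≤ Real.exp (b * R ^ 2) / (2 * (b * R ^ 2)) * (1 + 128 / (b * R ^ 2)) := by
  let E : ℝ → ℝ := fun s => Real.exp (b * s ^ 2) * (1 / (b * s ^ 2 + 8) + 128 / (b * s ^ 2 + 8) ^ 2) / 2
  have hE : ∀ s, HasDerivAt E (b * s * Real.exp (b * s ^ 2) *
      (1 / (b * s ^ 2 + 8) + 127 / (b * s ^ 2 + 8) ^ 2 - 256 / (b * s ^ 2 + 8) ^ 3)) s := by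
    intro s
    have hpos : b * s ^ 2 + 8 ≠ 0 := by positivity
    have h1 : HasDerivAt (fun s : ℝ => b * s ^ 2 + 8) (2 * b * s) s := by
      have := ((hasDerivAt_pow 2 s).const_mul b).add_const 8
      refine this.congr_deriv ?_
      norm_num
      ring
    have h2 := (hasDerivAt_const s (1 : ℝ)).div h1 hpos
    have h3 := (hasDerivAt_const s (128 : ℝ)).div (h1.pow 2) (pow_ne_zero 2 hpos)
    have h4 := ((hasDerivAt_exp_sq b s).mul (h2.add h3)).div_const 2
    refine h4.congr_deriv ?_
    simp only [Pi.div_apply, Pi.pow_apply, Pi.add_apply]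
    field_simp
    ring
  have key : ∫ s in (0 : ℝ)..R, torsK b s ≤ E R - E 0 := by
    apply intervalIntegral.integral_le_sub_of_hasDeriv_right_of_le hR.le
      (fun s _ => (hE s).continuousAt.continuousWithinAt)
      (fun s _ => (hE s).hasDerivWithinAt)
      ((torsK_continuous b).continuousOn.integrableOn_Icc)
    intro s hs
    have hs0 : 0 < s := hs.1
    rw [torsK_of_ne b hs0.ne']
    have hx : 0 < b * s ^ 2 := by positivity
    have := exp_primitive_ineq hx
    have e1 : (Real.exp (b * s ^ 2) - 1) / s
        = b * s * Real.exp (b * s ^ 2) * ((1 - Real.exp (-(b * s ^ 2))) / (b * s ^ 2)) := by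
      rw [Real.exp_neg]
      field_simp
    rw [e1]
    gcongr
  have hE0 : 0 ≤ E 0 := by simp only [E]; positivity
  have hER : E R ≤ Real.exp (b * R ^ 2) * (1 / (b * R ^ 2) + 128 / (b * R ^ 2) ^ 2) / 2 := by
    simp only [E]
    gcongr <;> linarith
  have : Real.exp (b * R ^ 2) * (1 / (b * R ^ 2) + 128 / (b * R ^ 2) ^ 2) / 2
      = Real.exp (b * R ^ 2) / (2 * (b * R ^ 2)) * (1 + 128 / (b * R ^ 2)) := by
    field_simp
  linarith

/-- The algebra behind the mode inequality. With `q = (X - 1) / F`, `a = |y'|²`, `n = |y|²`,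
`c = Re (y' ȳ)`, the difference of the two sides is `r |h y' - s y|²` for
`s = (h m - B r² / 2 - h q) / r`, plus two nonnegative terms. When `X = e^{Br²/2h}` and `F` is the
torsion function with `F' = -(X - 1) / r`, the left side is the derivative of
`h (h m - B r² / 2 - h q) |y|²`. -/
theorem mode_algebra {h B Lam m r F X a n c : ℝ} (hh : 0 < h) (hr : 0 < r)
    (hm : 0 ≤ m) (hF : 0 < F) (hX : 1 ≤ X) (hLam : Lam * F ≤ h * B) (hn : 0 ≤ n)
    (hsq : ∀ s : ℝ, 0 ≤ h ^ 2 * a - 2 * h * s * c + s ^ 2 * n) :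
    h * (-(B * r) - h * (B / h * r * X / F + ((X - 1) / F) ^ 2 / r)) * n
        + h * (h * m - B * r ^ 2 / 2 - h * ((X - 1) / F)) * (2 * c)
      ≤ r * (h ^ 2 * a) + (h * m - B * r ^ 2 / 2) ^ 2 * n / r - (h * B + Lam) * (r * n) := by
  have h1 := hsq ((h * m - B * r ^ 2 / 2 - h * ((X - 1) / F)) / r)
  have h2 : 0 ≤ (h * B / F - Lam) * (r * n) := by
    apply mul_nonneg _ (by positivity)
    rw [sub_nonneg, le_div_iff₀ hF]; exact hLam
  have h3 : 0 ≤ 2 * h ^ 2 * m * ((X - 1) / F) / r * n := by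
    have : 0 ≤ (X - 1) / F := div_nonneg (by linarith) hF.le
    positivity
  have h4 := mul_nonneg hr.le h1
  have : r * (h ^ 2 * a) + (h * m - B * r ^ 2 / 2) ^ 2 * n / r - (h * B + Lam) * (r * n)
     - (h * (-(B * r) - h * (B / h * r * X / F + ((X - 1) / F) ^ 2 / r)) * n
        + h * (h * m - B * r ^ 2 / 2 - h * ((X - 1) / F)) * (2 * c))
     = r * (h ^ 2 * a - 2 * h * ((h * m - B * r ^ 2 / 2 - h * ((X - 1) / F)) / r) * c
        + ((h * m - B * r ^ 2 / 2 - h * ((X - 1) / F)) / r) ^ 2 * n)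
      + (h * B / F - Lam) * (r * n) + 2 * h ^ 2 * m * ((X - 1) / F) / r * n := by
    field_simp
    ring
  linarith

/-! ### One-dimensional inequalities for the angular modes -/

theorem hasDerivAt_norm_sq {y : ℝ → ℂ} {y' : ℂ} {r : ℝ} (hy : HasDerivAt y y' r) :
    HasDerivAt (fun r => ‖y r‖ ^ 2) (2 * (y' * (starRingEnd ℂ) (y r)).re) r := by
  have h := hy.norm_sq
  refine h.congr_deriv ?_
  rw [Complex.inner]

theorem norm_sq_sub_expand (h s : ℝ) (y y' : ℂ) :
    0 ≤ h ^ 2 * ‖y'‖ ^ 2 - 2 * h * s * (y' * (starRingEnd ℂ) y).re + s ^ 2 * ‖y‖ ^ 2 := by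
  have : h ^ 2 * ‖y'‖ ^ 2 - 2 * h * s * (y' * (starRingEnd ℂ) y).re + s ^ 2 * ‖y‖ ^ 2
      = (h * y'.re - s * y.re) ^ 2 + (h * y'.im - s * y.im) ^ 2 := by
    rw [← Complex.normSq_eq_norm_sq, ← Complex.normSq_eq_norm_sq, Complex.normSq_apply,
      Complex.normSq_apply]
    simp
    ring
  rw [this]
  positivity

/-- The inequality for the angular modes `m < 0` holds pointwise. -/
theorem mode_neg {h B R Lam r : ℝ} {m : ℤ} (hh : 0 < h) (hB : 0 < B) (hm : m < 0)
    (hr : 0 < r) (hrR : r ≤ R) (hLam : Lam ≤ h ^ 2 / R ^ 2) :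
    (h * B + Lam) * r ≤ (h * m - B * r ^ 2 / 2) ^ 2 / r := by
  have hm' : (m : ℝ) ≤ -1 := by exact_mod_cast Int.le_sub_one_of_lt hm
  have hR : 0 < R := hr.trans_le hrR
  have hL : Lam * r ^ 2 ≤ h ^ 2 := by
    have h1 : Lam * r ^ 2 ≤ h ^ 2 / R ^ 2 * r ^ 2 := by gcongr
    have h2 : h ^ 2 / R ^ 2 * r ^ 2 ≤ h ^ 2 / R ^ 2 * R ^ 2 := by gcongr
    have h3 : h ^ 2 / R ^ 2 * R ^ 2 = h ^ 2 := by field_simp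
    linarith
  rw [le_div_iff₀ hr]
  have h4 : (h + B * r ^ 2 / 2) ^ 2 ≤ (h * m - B * r ^ 2 / 2) ^ 2 := by
    rw [← neg_sq (h * m - B * r ^ 2 / 2)]
    gcongr
    nlinarith
  nlinarith [sq_nonneg (B * r ^ 2)]

/-- The inequality for the angular modes `m ≥ 0`, by comparison with the torsion function
`F(r) = ∫_r^R (e^{Bs²/2h} - 1)/s ds`: the integrand of the difference dominates the derivative of
`S = h (h m - B r² / 2 - h (e^{Br²/2h} - 1) / F) |y|²`, which vanishes at both ends. Here `y` is the
`m`-th angular coefficient of `u` and `b` that of the tangential part of `(h∇ - iA)u`. -/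
theorem mode_nonneg {h B R Lam ρ : ℝ} {m : ℤ} (hh : 0 < h) (hB : 0 < B) (hm : 0 ≤ m)
    (hρ : 0 < ρ) (hρR : ρ < R) (hLam0 : 0 ≤ Lam)
    (hLam : Lam * ∫ s in (0 : ℝ)..R, torsK (B / (2 * h)) s ≤ h * B)
    {y y' b : ℝ → ℂ} (hy : ∀ r, HasDerivAt y (y' r) r) (hy' : Continuous y') (hb : Continuous b)
    (hyb : ∀ r : ℝ, (r : ℂ) * b r = Complex.I * ((h * m - B * r ^ 2 / 2 : ℝ) : ℂ) * y r)
    (hyρ : y ρ = 0) :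
    (h * B + Lam) * ∫ r in (0 : ℝ)..ρ, r * ‖y r‖ ^ 2
      ≤ ∫ r in (0 : ℝ)..ρ, r * (h ^ 2 * ‖y' r‖ ^ 2 + ‖b r‖ ^ 2) := by
  set β := B / (2 * h) with hβ
  have hβ0 : 0 < β := by positivity
  have hyc : Continuous y := continuous_iff_continuousAt.2 fun r => (hy r).continuousAt
  have kc := torsK_continuous β
  let F : ℝ → ℝ := fun r => ∫ s in r..R, torsK β s
  have hFd : ∀ r, HasDerivAt F (-torsK β r) r := fun r =>
    intervalIntegral.integral_hasDerivAt_left (kc.intervalIntegrable _ _)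
      (kc.stronglyMeasurableAtFilter _ _) kc.continuousAt
  have hFpos : ∀ r, 0 ≤ r → r < R → 0 < F r := fun r hr0 hr =>
    intervalIntegral.intervalIntegral_pos_of_pos_on (kc.intervalIntegrable _ _)
      (fun s hs => torsK_pos hβ0 (hr0.trans_lt hs.1)) hr
  have hFle : ∀ r, 0 ≤ r → F r ≤ F 0 := by
    intro r hr
    have h1 : F 0 = (∫ s in (0 : ℝ)..r, torsK β s) + F r :=
      (intervalIntegral.integral_add_adjacent_intervals (kc.intervalIntegrable _ _)
        (kc.intervalIntegrable _ _)).symm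
    have h2 : 0 ≤ ∫ s in (0 : ℝ)..r, torsK β s := by
      apply intervalIntegral.integral_nonneg_of_ae_restrict hr
      filter_upwards [ae_restrict_mem measurableSet_Icc,
        ae_restrict_of_ae (Measure.ae_ne volume (0 : ℝ))] with s hs hs0
      exact (torsK_pos hβ0 (lt_of_le_of_ne hs.1 (Ne.symm hs0))).le
    linarith
  let X : ℝ → ℝ := fun r => Real.exp (β * r ^ 2)
  have hXd : ∀ r, HasDerivAt X (2 * β * r * X r) r := hasDerivAt_exp_sq β
  let S : ℝ → ℝ := fun r => h * (h * m - B * r ^ 2 / 2 - h * ((X r - 1) / F r)) * ‖y r‖ ^ 2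
  have hFc : Continuous F := continuous_iff_continuousAt.2 fun r => (hFd r).continuousAt
  have hXc : Continuous X := continuous_iff_continuousAt.2 fun r => (hXd r).continuousAt
  have hSc : ContinuousOn S (Set.Icc 0 ρ) := by
    have : ContinuousOn (fun r => (X r - 1) / F r) (Set.Icc 0 ρ) :=
      (hXc.sub continuous_const).continuousOn.div hFc.continuousOn
        fun r hr => (hFpos r hr.1 (hr.2.trans_lt hρR)).ne'
    apply ContinuousOn.mul _ (by fun_prop)
    apply ContinuousOn.mul continuousOn_const
    apply ContinuousOn.sub (by fun_prop)
    exact continuousOn_const.mul this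
  -- for `m ≠ 0` the relation between `y` and `b` at `r = 0` forces `y 0 = 0`
  have hS0 : S 0 = 0 := by
    have h1 := hyb 0
    rcases eq_or_ne m 0 with rfl | hm0
    · simp [S, X]
    · have : y 0 = 0 := by
        simpa [hh.ne', hm0] using h1
      simp [S, this]
  have hSρ : S ρ = 0 := by simp [S, hyρ]
  let D : ℝ → ℝ := fun r =>
    h * (-(B * r) - h * (B / h * r * X r / F r + ((X r - 1) / F r) ^ 2 / r)) * ‖y r‖ ^ 2
        + h * (h * m - B * r ^ 2 / 2 - h * ((X r - 1) / F r))
          * (2 * (y' r * (starRingEnd ℂ) (y r)).re)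
  have hSd : ∀ r ∈ Set.Ioo 0 ρ, HasDerivAt S (D r) r := by
    intro r hr
    have hF := hFpos r hr.1.le (hr.2.trans hρR)
    have hr0 : 0 < r := hr.1
    have h1 := ((hXd r).sub_const 1).div (hFd r) hF.ne'
    have h2 : HasDerivAt (fun r : ℝ => h * m - B * r ^ 2 / 2) (-(B * r)) r := by
      refine ((((hasDerivAt_pow 2 r).const_mul B).div_const 2).const_sub (h * m)).congr_deriv ?_
      norm_num
      ring
    have h3 := ((h2.sub (h1.const_mul h)).const_mul h).mul (hasDerivAt_norm_sq (hy r))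
    refine h3.congr_deriv ?_
    simp only [D, Pi.sub_apply, Pi.div_apply]
    rw [torsK_of_ne β hr0.ne', hβ]
    change h * (-(B * r) - h * (((2 * (B / (2 * h)) * r * X r) * F r
      - (X r - 1) * -((X r - 1) / r)) / F r ^ 2)) * ‖y r‖ ^ 2 + _ = _
    congr 1
    field_simp
    ring
  let Φ : ℝ → ℝ := fun r => r * (h ^ 2 * ‖y' r‖ ^ 2 + ‖b r‖ ^ 2) - (h * B + Lam) * (r * ‖y r‖ ^ 2)
  have hΦc : Continuous Φ := by fun_prop
  have key : S ρ - S 0 ≤ ∫ r in (0 : ℝ)..ρ, Φ r := by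
    apply intervalIntegral.sub_le_integral_of_hasDeriv_right_of_le hρ.le hSc
      (fun r hr => (hSd r hr).hasDerivWithinAt) hΦc.continuousOn.integrableOn_Icc
    intro r hr
    have hr0 : 0 < r := hr.1
    have hX : 1 ≤ X r := Real.one_le_exp (by positivity)
    have hbn : r * ‖b r‖ ^ 2 = (h * m - B * r ^ 2 / 2) ^ 2 * ‖y r‖ ^ 2 / r := by
      have h1 := congrArg (fun z => ‖z‖ ^ 2) (hyb r)
      simp only [norm_mul, Complex.norm_real, Complex.norm_I, one_mul, mul_pow, Real.norm_eq_abs,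
        sq_abs] at h1
      rw [eq_div_iff hr0.ne', ← h1]
      ring
    have hL : Lam * F r ≤ h * B :=
      (mul_le_mul_of_nonneg_left (hFle r hr0.le) hLam0).trans hLam
    have := mode_algebra (m := (m : ℝ)) (a := ‖y' r‖ ^ 2) (n := ‖y r‖ ^ 2)
      (c := (y' r * (starRingEnd ℂ) (y r)).re) hh hr0 (by exact_mod_cast hm)
      (hFpos r hr0.le (hr.2.trans hρR)) hX hL (by positivity)
      (fun s => norm_sq_sub_expand h s (y r) (y' r))
    simp only [D, Φ]
    linarith [mul_add r (h ^ 2 * ‖y' r‖ ^ 2) (‖b r‖ ^ 2)]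
  rw [hS0, hSρ, sub_zero] at key
  simp only [Φ] at key
  rw [intervalIntegral.integral_sub, intervalIntegral.integral_const_mul] at key
  · linarith
  · exact Continuous.intervalIntegrable (by fun_prop) _ _
  · exact Continuous.intervalIntegrable (by fun_prop) _ _

/-- The one-dimensional spectral inequality satisfied by every angular mode. -/
theorem mode_ineq {h B R Lam ρ : ℝ} (m : ℤ) (hh : 0 < h) (hB : 0 < B)
    (hρ : 0 < ρ) (hρR : ρ < R) (hLam0 : 0 ≤ Lam) (hLamR : Lam ≤ h ^ 2 / R ^ 2)
    (hLam : Lam * ∫ s in (0 : ℝ)..R, torsK (B / (2 * h)) s ≤ h * B)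
    {y y' b : ℝ → ℂ} (hy : ∀ r, HasDerivAt y (y' r) r) (hy' : Continuous y') (hb : Continuous b)
    (hyb : ∀ r : ℝ, (r : ℂ) * b r = Complex.I * ((h * m - B * r ^ 2 / 2 : ℝ) : ℂ) * y r)
    (hyρ : y ρ = 0) :
    (h * B + Lam) * ∫ r in (0 : ℝ)..ρ, r * ‖y r‖ ^ 2
      ≤ ∫ r in (0 : ℝ)..ρ, r * (h ^ 2 * ‖y' r‖ ^ 2 + ‖b r‖ ^ 2) := by
  rcases le_or_gt 0 m with hm | hm
  · exact mode_nonneg hh hB hm hρ hρR hLam0 hLam hy hy' hb hyb hyρ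
  have hyc : Continuous y := continuous_iff_continuousAt.2 fun r => (hy r).continuousAt
  rw [← intervalIntegral.integral_const_mul]
  apply intervalIntegral.integral_mono_on hρ.le
  · exact Continuous.intervalIntegrable (by fun_prop) _ _
  · exact Continuous.intervalIntegrable (by fun_prop) _ _
  intro r hr
  rcases hr.1.eq_or_lt with rfl | hr0
  · simp
  have hbn : r * ‖b r‖ ^ 2 = (h * m - B * r ^ 2 / 2) ^ 2 / r * ‖y r‖ ^ 2 := by
    have h1 := congrArg (fun z => ‖z‖ ^ 2) (hyb r)
    simp only [norm_mul, Complex.norm_real, Complex.norm_I, one_mul, mul_pow, Real.norm_eq_abs,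
      sq_abs] at h1
    rw [div_mul_eq_mul_div, eq_div_iff hr0.ne', ← h1]
    ring
  have h2 := mode_neg (Lam := Lam) hh hB hm hr0 (hr.2.trans hρR.le) hLamR
  calc (h * B + Lam) * (r * ‖y r‖ ^ 2) = (h * B + Lam) * r * ‖y r‖ ^ 2 := by ring
    _ ≤ (h * m - B * r ^ 2 / 2) ^ 2 / r * ‖y r‖ ^ 2 := by gcongr
    _ = r * ‖b r‖ ^ 2 := hbn.symm
    _ ≤ r * (h ^ 2 * ‖y' r‖ ^ 2 + ‖b r‖ ^ 2) := by
      gcongr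
      nlinarith [sq_nonneg (h * ‖y' r‖)]

/-! ### Angular Fourier coefficients -/

/-- The `m`-th angular Fourier coefficient, at radius `r`, of a function `G r θ` given in polar
coordinates. -/
def angCoeff (G : ℝ → ℝ → ℂ) (m : ℤ) (r : ℝ) : ℂ :=
  fourierCoeffOn (neg_lt_self Real.pi_pos) (G r) m

theorem angCoeff_eq (G : ℝ → ℝ → ℂ) (m : ℤ) (r : ℝ) :
    angCoeff G m r = (1 / (Real.pi - -Real.pi)) •
      ∫ θ in (-Real.pi)..Real.pi,
        fourier (-m) (θ : AddCircle (Real.pi - -Real.pi)) • G r θ :=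
  fourierCoeffOn_eq_integral _ _ _

theorem continuous_fourier_smul {G : ℝ → ℝ → ℂ} (hG : Continuous (Function.uncurry G)) (m : ℤ) :
    Continuous (Function.uncurry fun r θ : ℝ =>
      fourier (-m) (θ : AddCircle (Real.pi - -Real.pi)) • G r θ) := by
  have h1 : Continuous fun p : ℝ × ℝ => fourier (-m) ((p.2 : ℝ) : AddCircle (Real.pi - -Real.pi)) :=
    (fourier (-m)).continuous.comp ((AddCircle.continuous_mk' _).comp continuous_snd)
  exact h1.smul hG

theorem angCoeff_continuous {G : ℝ → ℝ → ℂ} (hG : Continuous (Function.uncurry G)) (m : ℤ) :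
    Continuous (angCoeff G m) := by
  have : angCoeff G m = fun r => (1 / (Real.pi - -Real.pi)) •
      ∫ θ in (-Real.pi)..Real.pi,
        fourier (-m) (θ : AddCircle (Real.pi - -Real.pi)) • G r θ :=
    funext fun r => angCoeff_eq G m r
  rw [this]
  exact (intervalIntegral.continuous_parametric_intervalIntegral_of_continuous'
    (μ := volume) (continuous_fourier_smul hG m) _ _).const_smul (1 / (Real.pi - -Real.pi))

theorem angCoeff_hasDerivAt {G G' : ℝ → ℝ → ℂ} (hG : Continuous (Function.uncurry G))
    (hG' : Continuous (Function.uncurry G'))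
    (hd : ∀ r θ, HasDerivAt (fun r => G r θ) (G' r θ) r) (m : ℤ) (r : ℝ) :
    HasDerivAt (angCoeff G m) (angCoeff G' m r) r := by
  have e : angCoeff G m = fun r => (1 / (Real.pi - -Real.pi)) •
      ∫ θ in (-Real.pi)..Real.pi,
        fourier (-m) (θ : AddCircle (Real.pi - -Real.pi)) • G r θ :=
    funext fun r => angCoeff_eq G m r
  rw [e, angCoeff_eq]
  have c1 := continuous_fourier_smul hG m
  have c2 := continuous_fourier_smul hG' m
  have hK : IsCompact (Metric.closedBall r 1 ×ˢ Set.uIcc (-Real.pi) Real.pi) :=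
    (isCompact_closedBall r 1).prod isCompact_uIcc
  obtain ⟨C, hC⟩ := hK.exists_bound_of_continuousOn c2.continuousOn
  have := intervalIntegral.hasDerivAt_integral_of_dominated_loc_of_deriv_le (μ := volume)
    (F := fun r θ => fourier (-m) (θ : AddCircle (Real.pi - -Real.pi)) • G r θ)
    (F' := fun r θ => fourier (-m) (θ : AddCircle (Real.pi - -Real.pi)) • G' r θ)
    (a := -Real.pi) (b := Real.pi) (bound := fun _ => C)
    (Metric.closedBall_mem_nhds r one_pos)
    (Eventually.of_forall fun r' =>
      (Continuous.uncurry_left r' c1).aestronglyMeasurable)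
    ((Continuous.uncurry_left r c1).intervalIntegrable _ _)
    (Continuous.uncurry_left r c2).aestronglyMeasurable
    (Eventually.of_forall fun θ hθ r' hr' =>
      hC (r', θ) ⟨hr', Set.uIoc_subset_uIcc hθ⟩)
    (by simp)
    (Eventually.of_forall fun θ _ r' _ => (hd r' θ).const_mul _)
  exact this.2.const_smul (1 / (Real.pi - -Real.pi))

/-- Angular integration by parts; `τ` is the tangential derivative, so `∂_θ G = r τ`. -/
theorem angCoeff_deriv {G τ : ℝ → ℝ → ℂ} {r : ℝ}
    (hτ : Continuous (τ r))
    (hd : ∀ θ, HasDerivAt (G r) ((r : ℂ) * τ r θ) θ) (hper : G r Real.pi = G r (-Real.pi)) (m : ℤ) :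
    (r : ℂ) * angCoeff τ m r = Complex.I * m * angCoeff G m r := by
  have hmul : (r : ℂ) * angCoeff τ m r
      = fourierCoeffOn (neg_lt_self Real.pi_pos) (fun θ => (r : ℂ) * τ r θ) m := by
    rw [angCoeff_eq, fourierCoeffOn_eq_integral, mul_smul_comm,
      ← intervalIntegral.integral_const_mul]
    congr 2
    ext θ
    simp only [smul_eq_mul]
    ring
  have hInt : IntervalIntegrable (fun θ => (r : ℂ) * τ r θ) volume (-Real.pi) Real.pi :=
    Continuous.intervalIntegrable (by fun_prop) _ _
  rw [hmul]
  rcases eq_or_ne m 0 with rfl | hm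
  · rw [fourierCoeffOn_eq_integral]
    have := intervalIntegral.integral_eq_sub_of_hasDerivAt (fun θ _ => hd θ) hInt
    simp only [neg_zero, fourier_zero, one_smul, Int.cast_zero, mul_zero, zero_mul]
    rw [this, hper, sub_self, smul_zero]
  · have := fourierCoeffOn_of_hasDerivAt (neg_lt_self Real.pi_pos) hm (fun θ _ => hd θ) hInt
    rw [angCoeff, this, hper]
    have hpi : (Real.pi : ℂ) ≠ 0 := by exact_mod_cast Real.pi_ne_zero
    have hm' : (m : ℂ) ≠ 0 := by exact_mod_cast hm
    push_cast
    field_simp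
    ring

/-- Parseval on a circle. -/
theorem angCoeff_parseval {W : ℝ → ℝ → ℂ} {r : ℝ} (hW : Continuous (W r)) :
    HasSum (fun m => 2 * Real.pi * ‖angCoeff W m r‖ ^ 2)
      (∫ θ in (-Real.pi)..Real.pi, ‖W r θ‖ ^ 2) := by
  have hL2 : MemLp (W r) 2 (volume.restrict (Set.Ioc (-Real.pi) Real.pi)) := by
    obtain ⟨C, hC⟩ := (isCompact_Icc (a := -Real.pi) (b := Real.pi)).exists_bound_of_continuousOn
      hW.continuousOn
    refine MemLp.of_bound hW.aestronglyMeasurable C ?_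
    filter_upwards [ae_restrict_mem measurableSet_Ioc] with θ hθ
    exact hC θ (Set.Ioc_subset_Icc_self hθ)
  have h := (hasSum_sq_fourierCoeffOn (neg_lt_self Real.pi_pos) hL2).mul_left (2 * Real.pi)
  have e : 2 * Real.pi * ((Real.pi - -Real.pi)⁻¹ • ∫ θ in (-Real.pi)..Real.pi, ‖W r θ‖ ^ 2)
      = ∫ θ in (-Real.pi)..Real.pi, ‖W r θ‖ ^ 2 := by
    rw [smul_eq_mul, sub_neg_eq_add, ← two_mul]
    have := Real.pi_pos
    field_simp
  rw [e] at h
  exact h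

/-- The area integral of `|W|²` in polar coordinates, as a sum over angular modes. -/
theorem lintegral_polar_parseval {W : ℝ → ℝ → ℂ} {ρ : ℝ} (hρ : 0 < ρ)
    (hW : Continuous (Function.uncurry W)) (h0 : ∀ r θ, ρ ≤ r → W r θ = 0) :
    ∫⁻ r in Set.Ioi (0 : ℝ), ∫⁻ θ in Set.Ioo (-Real.pi) Real.pi,
        ENNReal.ofReal (r * ‖W r θ‖ ^ 2)
      = ∑' m : ℤ, ENNReal.ofReal (2 * Real.pi * ∫ r in (0 : ℝ)..ρ, r * ‖angCoeff W m r‖ ^ 2) := by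
  have hWr : ∀ r, Continuous (W r) := fun r => Continuous.uncurry_left r hW
  have h1 : ∀ r ∈ Set.Ioi (0 : ℝ), ∫⁻ θ in Set.Ioo (-Real.pi) Real.pi,
        ENNReal.ofReal (r * ‖W r θ‖ ^ 2)
      = ∑' m : ℤ, ENNReal.ofReal (2 * Real.pi * (r * ‖angCoeff W m r‖ ^ 2)) := by
    intro r hr
    have hr0 : 0 < r := hr
    have hs := (angCoeff_parseval (hWr r)).mul_left r
    have hi : IntegrableOn (fun θ => r * ‖W r θ‖ ^ 2) (Set.Ioo (-Real.pi) Real.pi) :=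
      (Continuous.integrableOn_Icc (by have := hWr r; fun_prop)).mono_set Set.Ioo_subset_Icc_self
    rw [← ofReal_integral_eq_lintegral_ofReal hi (Eventually.of_forall fun θ => by positivity),
      ← integral_Ioc_eq_integral_Ioo, ← intervalIntegral.integral_of_le (by linarith [Real.pi_pos]),
      intervalIntegral.integral_const_mul, ← hs.tsum_eq,
      ENNReal.ofReal_tsum_of_nonneg (fun m => by positivity) hs.summable]
    congr 1
    ext m
    congr 1
    ring
  rw [setLIntegral_congr_fun measurableSet_Ioi h1, lintegral_tsum]
  · congr 1
    ext m
    have hc := angCoeff_continuous hW m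
    have hz : ∀ r, ρ ≤ r → angCoeff W m r = 0 := by
      intro r hr
      rw [angCoeff_eq]
      simp [h0 r _ hr]
    have hi : IntegrableOn (fun r => 2 * Real.pi * (r * ‖angCoeff W m r‖ ^ 2)) (Set.Ioc 0 ρ) :=
      (Continuous.integrableOn_Icc (by fun_prop)).mono_set Set.Ioc_subset_Icc_self
    rw [← intervalIntegral.integral_const_mul, intervalIntegral.integral_of_le hρ.le,
      ofReal_integral_eq_lintegral_ofReal hi]
    · rw [← Set.Ioc_union_Ioi_eq_Ioi hρ.le,
        lintegral_union measurableSet_Ioi (Set.Ioc_disjoint_Ioi le_rfl),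
        setLIntegral_congr_fun (g := fun _ => 0) (s := Set.Ioi ρ) measurableSet_Ioi
          (fun r hr => by simp [hz r (le_of_lt hr)])]
      simp
    · filter_upwards [ae_restrict_mem measurableSet_Ioc] with r hr
      have := hr.1
      positivity
  · intro m
    have hc := angCoeff_continuous hW m
    exact (Measurable.ennreal_ofReal (Continuous.measurable (by fun_prop))).aemeasurable

/-! ### The quadratic form in polar coordinates -/

/-- The radial unit vector `(cos θ, sin θ)`. -/
def eRad (θ : ℝ) : E2 := !₂[Real.cos θ, Real.sin θ]

/-- The tangential unit vector `(-sin θ, cos θ)`. -/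
def eTan (θ : ℝ) : E2 := !₂[-Real.sin θ, Real.cos θ]

theorem eRad_eq (θ : ℝ) : eRad θ =
    Real.cos θ • EuclideanSpace.single (0 : Fin 2) (1 : ℝ)
      + Real.sin θ • EuclideanSpace.single (1 : Fin 2) (1 : ℝ) := by
  ext i
  fin_cases i <;> simp [eRad]

theorem eTan_eq (θ : ℝ) : eTan θ =
    (-Real.sin θ) • EuclideanSpace.single (0 : Fin 2) (1 : ℝ)
      + Real.cos θ • EuclideanSpace.single (1 : Fin 2) (1 : ℝ) := by
  ext i
  fin_cases i <;> simp [eTan]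

theorem eRad_hasDerivAt (θ : ℝ) : HasDerivAt eRad (eTan θ) θ := by
  have h : eRad = fun θ => Real.cos θ • EuclideanSpace.single (0 : Fin 2) (1 : ℝ)
      + Real.sin θ • EuclideanSpace.single (1 : Fin 2) (1 : ℝ) := funext eRad_eq
  rw [h, eTan_eq]
  exact ((Real.hasDerivAt_cos θ).smul_const _).add ((Real.hasDerivAt_sin θ).smul_const _)

theorem eRad_continuous : Continuous eRad :=
  continuous_iff_continuousAt.2 fun θ => (eRad_hasDerivAt θ).continuousAt

theorem eTan_continuous : Continuous eTan := by
  rw [funext eTan_eq]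
  fun_prop

theorem eRad_norm (θ : ℝ) : ‖eRad θ‖ = 1 := by
  rw [EuclideanSpace.norm_eq]
  simp [eRad, Fin.sum_univ_two]

/-- Polar coordinates on `E2`. -/
theorem lintegral_polar {g : E2 → ENNReal} (hg : Measurable g) :
    ∫⁻ x, g x = ∫⁻ r in Set.Ioi (0 : ℝ), ∫⁻ θ in Set.Ioo (-Real.pi) Real.pi,
      ENNReal.ofReal r * g (r • eRad θ) := by
  have e1 : ∫⁻ x, g x = ∫⁻ p : Fin 2 → ℝ, g (WithLp.toLp 2 p) :=
    ((PiLp.volume_preserving_toLp (Fin 2)).lintegral_comp hg).symm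
  have hm : Measurable fun p : Fin 2 → ℝ => g (WithLp.toLp 2 p) :=
    hg.comp (PiLp.volume_preserving_toLp (Fin 2)).measurable
  have e2 : ∫⁻ p : Fin 2 → ℝ, g (WithLp.toLp 2 p) = ∫⁻ q : ℝ × ℝ, g !₂[q.1, q.2] :=
    (((volume_preserving_finTwoArrow ℝ).symm).lintegral_comp hm).symm
  have hm2 : Measurable fun q : ℝ × ℝ => g !₂[q.1, q.2] :=
    hm.comp (MeasurableEquiv.finTwoArrow (α := ℝ)).symm.measurable
  rw [e1, e2, ← lintegral_comp_polarCoord_symm, polarCoord_target, Measure.volume_eq_prod,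
    setLIntegral_prod]
  · refine lintegral_congr fun r => lintegral_congr fun θ => ?_
    rw [smul_eq_mul]
    congr 2
    ext i
    fin_cases i <;> simp [eRad]
  · refine Measurable.aemeasurable ?_
    apply Measurable.mul (by fun_prop)
    exact hm2.comp (continuous_polarCoord_symm.measurable)

/-- `|h∂₁u - iA₁u|² + |h∂₂u - iA₂u|²` for `A = (-Bx₂/2, Bx₁/2)`. -/
def kinDens (B h : ℝ) (u : E2 → ℂ) (x : E2) : ℝ :=
  ‖(h : ℂ) * pdC 0 u x - Complex.I * ((-B * x 1 / 2 : ℝ) : ℂ) * u x‖ ^ 2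
    + ‖(h : ℂ) * pdC 1 u x - Complex.I * ((B * x 0 / 2 : ℝ) : ℂ) * u x‖ ^ 2

theorem kinDens_continuous (B h : ℝ) {u : E2 → ℂ} (hu : ContDiff ℝ (⊤ : ℕ∞) u) :
    Continuous (kinDens B h u) := by
  have h1 : Continuous (fderiv ℝ u) := hu.continuous_fderiv (by simp)
  have h2 : ∀ i, Continuous (pdC i u) := fun i => h1.clm_apply continuous_const
  have h3 := h2 0
  have h4 := h2 1
  have h5 := hu.continuous
  unfold kinDens
  fun_prop

theorem rotate_norm_sq {c s : ℝ} (hcs : s ^ 2 + c ^ 2 = 1) (a b : ℂ) :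
    ‖a‖ ^ 2 + ‖b‖ ^ 2 = ‖(c : ℂ) * a + s * b‖ ^ 2 + ‖-(s : ℂ) * a + c * b‖ ^ 2 := by
  simp only [← Complex.normSq_eq_norm_sq, Complex.normSq_apply]
  simp
  linear_combination (-(a.re ^ 2 + a.im ^ 2 + b.re ^ 2 + b.im ^ 2)) * hcs

/-- Rotating the frame to the radial and tangential directions. -/
theorem kinDens_polar (B h : ℝ) (u : E2 → ℂ) (r θ : ℝ) :
    kinDens B h u (r • eRad θ)
      = ‖(h : ℂ) * fderiv ℝ u (r • eRad θ) (eRad θ)‖ ^ 2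
        + ‖(h : ℂ) * fderiv ℝ u (r • eRad θ) (eTan θ)
            - Complex.I * ((B * r / 2 : ℝ) : ℂ) * u (r • eRad θ)‖ ^ 2 := by
  have hx0 : (r • eRad θ) 0 = r * Real.cos θ := by simp [eRad]
  have hx1 : (r • eRad θ) 1 = r * Real.sin θ := by simp [eRad]
  have hr : ∀ x, fderiv ℝ u x (eRad θ)
      = Real.cos θ * pdC 0 u x + Real.sin θ * pdC 1 u x := by
    intro x
    rw [eRad_eq θ, map_add, map_smul, map_smul]
    simp [pdC]
  have ht : ∀ x, fderiv ℝ u x (eTan θ)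
      = -Real.sin θ * pdC 0 u x + Real.cos θ * pdC 1 u x := by
    intro x
    rw [eTan_eq θ, map_add, map_smul, map_smul]
    simp [pdC]
  rw [kinDens, hx0, hx1, hr, ht]
  generalize pdC 0 u (r • eRad θ) = p
  generalize pdC 1 u (r • eRad θ) = q
  generalize u (r • eRad θ) = w
  have hcs := Real.sin_sq_add_cos_sq θ
  have hcs' : ((Real.sin θ : ℝ) : ℂ) ^ 2 + ((Real.cos θ : ℝ) : ℂ) ^ 2 = 1 := by exact_mod_cast hcs
  rw [rotate_norm_sq hcs]
  clear hr ht hx0 hx1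
  generalize Real.cos θ = c at *
  generalize Real.sin θ = s at *
  congr 3
  · push_cast
    ring
  · push_cast
    linear_combination (-(Complex.I * (B * r / 2) * w)) * hcs'

/-- A smooth function supported in the open disk vanishes outside a smaller disk. -/
theorem exists_radius {R : ℝ} (hR : 0 < R) {u : E2 → ℂ} (hu : IsCptSmoothIn (Metric.ball 0 R) u) :
    ∃ ρ, 0 < ρ ∧ ρ < R ∧ ∀ x, ρ ≤ ‖x‖ → x ∉ tsupport u := by
  obtain ⟨ρ, hρ, hsub⟩ := exists_lt_subset_ball (isClosed_tsupport u) hu.2.2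
  refine ⟨max ρ (R / 2), by positivity, max_lt hρ (by linarith), fun x hx hxs => ?_⟩
  have := hsub hxs
  rw [mem_ball_zero_iff] at this
  linarith [le_max_left ρ (R / 2)]

/-- The lower bound for the quadratic form, obtained by summing the mode inequalities. -/
theorem kinDens_lower {h B R Lam : ℝ} (hh : 0 < h) (hB : 0 < B) (hR : 0 < R)
    (hLam0 : 0 ≤ Lam) (hLamR : Lam ≤ h ^ 2 / R ^ 2)
    (hLam : Lam * ∫ s in (0 : ℝ)..R, torsK (B / (2 * h)) s ≤ h * B)
    {u : E2 → ℂ} (hu : IsCptSmoothIn (Metric.ball 0 R) u) :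
    ENNReal.ofReal (h * B + Lam) * ∫⁻ x, ENNReal.ofReal (‖u x‖ ^ 2)
      ≤ ∫⁻ x, ENNReal.ofReal (kinDens B h u x) := by
  obtain ⟨ρ, hρ, hρR, hout⟩ := exists_radius hR hu
  obtain ⟨hsm, -, -⟩ := hu
  have hfc : Continuous (fderiv ℝ u) := hsm.continuous_fderiv (by simp)
  have huc := hsm.continuous
  have hdiff : Differentiable ℝ u := hsm.differentiable (by simp)
  have hrc : Continuous fun p : ℝ × ℝ => p.1 • eRad p.2 :=
    continuous_fst.smul (eRad_continuous.comp continuous_snd)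
  have hnorm : ∀ r θ : ℝ, ρ ≤ r → r • eRad θ ∉ tsupport u := by
    intro r θ hr
    apply hout
    rw [norm_smul, eRad_norm, mul_one]
    exact hr.trans (le_abs_self r)
  -- `u`, its radial derivative and its tangential derivative in polar coordinates
  let G : ℝ → ℝ → ℂ := fun r θ => u (r • eRad θ)
  let G' : ℝ → ℝ → ℂ := fun r θ => fderiv ℝ u (r • eRad θ) (eRad θ)
  let τ : ℝ → ℝ → ℂ := fun r θ => fderiv ℝ u (r • eRad θ) (eTan θ)
  let H : ℝ → ℝ → ℂ := fun r θ => (h : ℂ) * G' r θ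
  let b : ℝ → ℝ → ℂ := fun r θ => (h : ℂ) * τ r θ - Complex.I * ((B * r / 2 : ℝ) : ℂ) * G r θ
  have cG : Continuous (Function.uncurry G) := huc.comp hrc
  have cG' : Continuous (Function.uncurry G') :=
    (hfc.comp hrc).clm_apply (eRad_continuous.comp continuous_snd)
  have cτ : Continuous (Function.uncurry τ) :=
    (hfc.comp hrc).clm_apply (eTan_continuous.comp continuous_snd)
  have cH : Continuous (Function.uncurry H) := continuous_const.mul cG'
  have cb : Continuous (Function.uncurry b) := by
    refine (continuous_const.mul cτ).sub (Continuous.mul ?_ cG)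
    fun_prop
  have zu : ∀ x, x ∉ tsupport u → u x = 0 := fun x hx => image_eq_zero_of_notMem_tsupport hx
  have zf : ∀ x, x ∉ tsupport u → fderiv ℝ u x = 0 := fun x hx => by
    by_contra hne
    exact hx (support_fderiv_subset ℝ hne)
  have zG : ∀ r θ, ρ ≤ r → G r θ = 0 := fun r θ hr => zu _ (hnorm r θ hr)
  have zH : ∀ r θ, ρ ≤ r → H r θ = 0 := fun r θ hr => by
    simp [H, G', zf _ (hnorm r θ hr)]
  have zb : ∀ r θ, ρ ≤ r → b r θ = 0 := fun r θ hr => by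
    simp [b, τ, G, zf _ (hnorm r θ hr), zu _ (hnorm r θ hr)]
  have dG : ∀ r θ, HasDerivAt (fun r => G r θ) (G' r θ) r := by
    intro r θ
    have h1 : HasDerivAt (fun r : ℝ => r • eRad θ) (eRad θ) r := by
      simpa using (hasDerivAt_id r).smul_const (eRad θ)
    exact (hdiff _).hasFDerivAt.comp_hasDerivAt r h1
  have dτ : ∀ r θ, HasDerivAt (G r) ((r : ℂ) * τ r θ) θ := by
    intro r θ
    have h1 : HasDerivAt (fun θ : ℝ => r • eRad θ) (r • eTan θ) θ :=
      (eRad_hasDerivAt θ).const_smul r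
    refine ((hdiff _).hasFDerivAt.comp_hasDerivAt θ h1).congr_deriv ?_
    rw [map_smul]
    simp [τ]
  have per : ∀ r, G r Real.pi = G r (-Real.pi) := by
    intro r
    simp [G, eRad]
  have hpolar1 : ∫⁻ x, ENNReal.ofReal (‖u x‖ ^ 2)
      = ∑' m : ℤ, ENNReal.ofReal (2 * Real.pi * ∫ r in (0 : ℝ)..ρ, r * ‖angCoeff G m r‖ ^ 2) := by
    rw [← lintegral_polar_parseval hρ cG zG,
      lintegral_polar (Continuous.measurable (by fun_prop)).ennreal_ofReal]
    refine setLIntegral_congr_fun measurableSet_Ioi fun r hr => lintegral_congr fun θ => ?_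
    exact (ENNReal.ofReal_mul (le_of_lt hr)).symm
  have hpolar2 : ∫⁻ x, ENNReal.ofReal (kinDens B h u x)
      = ∑' m : ℤ, (ENNReal.ofReal (2 * Real.pi * ∫ r in (0 : ℝ)..ρ, r * ‖angCoeff H m r‖ ^ 2)
        + ENNReal.ofReal (2 * Real.pi * ∫ r in (0 : ℝ)..ρ, r * ‖angCoeff b m r‖ ^ 2)) := by
    have hmeas : Measurable (Function.uncurry fun r θ : ℝ => ENNReal.ofReal (r * ‖H r θ‖ ^ 2)) :=
      (Continuous.measurable (continuous_fst.mul (cH.norm.pow 2))).ennreal_ofReal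
    rw [ENNReal.tsum_add, ← lintegral_polar_parseval hρ cH zH, ← lintegral_polar_parseval hρ cb zb,
      lintegral_polar (kinDens_continuous B h hsm).measurable.ennreal_ofReal,
      ← lintegral_add_left hmeas.lintegral_prod_right]
    refine setLIntegral_congr_fun measurableSet_Ioi fun r hr => ?_
    have hr0 : (0 : ℝ) ≤ r := le_of_lt hr
    have hmr : Measurable fun θ : ℝ => ENNReal.ofReal (r * ‖H r θ‖ ^ 2) :=
      hmeas.comp measurable_prodMk_left
    rw [← lintegral_add_left hmr]
    refine lintegral_congr fun θ => ?_
    rw [← ENNReal.ofReal_mul hr0, kinDens_polar, mul_add,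
      ENNReal.ofReal_add (by positivity) (by positivity)]
  rw [hpolar1, hpolar2, ← ENNReal.tsum_mul_left]
  refine ENNReal.tsum_le_tsum fun m => ?_
  have hInt : ∀ W : ℝ → ℝ → ℂ, 0 ≤ ∫ r in (0 : ℝ)..ρ, r * ‖angCoeff W m r‖ ^ 2 := fun W =>
    intervalIntegral.integral_nonneg hρ.le fun r hr => mul_nonneg hr.1 (by positivity)
  have cy := angCoeff_continuous cG m
  have cy' := angCoeff_continuous cG' m
  have cbm := angCoeff_continuous cb m
  have hHm : ∀ r, angCoeff H m r = h * angCoeff G' m r := by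
    intro r
    rw [angCoeff_eq, angCoeff_eq, mul_smul_comm, ← intervalIntegral.integral_const_mul]
    congr 2
    ext θ
    simp only [smul_eq_mul, H]
    ring
  have hbm : ∀ r, angCoeff b m r
      = h * angCoeff τ m r - Complex.I * ((B * r / 2 : ℝ) : ℂ) * angCoeff G m r := by
    intro r
    have i1 : IntervalIntegrable (fun θ : ℝ => (h : ℂ) *
        (fourier (-m) (θ : AddCircle (Real.pi - -Real.pi)) • τ r θ)) volume (-Real.pi) Real.pi :=
      (continuous_const.mul
        (Continuous.uncurry_left r (continuous_fourier_smul cτ m))).intervalIntegrable _ _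
    have i2 : IntervalIntegrable (fun θ : ℝ => Complex.I * ((B * r / 2 : ℝ) : ℂ) *
        (fourier (-m) (θ : AddCircle (Real.pi - -Real.pi)) • G r θ)) volume (-Real.pi) Real.pi :=
      (continuous_const.mul
        (Continuous.uncurry_left r (continuous_fourier_smul cG m))).intervalIntegrable _ _
    rw [angCoeff_eq, angCoeff_eq, angCoeff_eq, mul_smul_comm, mul_smul_comm,
      ← intervalIntegral.integral_const_mul, ← intervalIntegral.integral_const_mul, ← smul_sub,
      ← intervalIntegral.integral_sub i1 i2]
    congr 2
    ext θ
    simp only [smul_eq_mul, b]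
    ring
  have key := mode_ineq m hh hB hρ hρR hLam0 hLamR hLam
    (angCoeff_hasDerivAt cG cG' dG m) cy' cbm
    (fun r => by
      have h1 := angCoeff_deriv (Continuous.uncurry_left r cτ) (dτ r) (per r) m
      rw [hbm]
      push_cast
      linear_combination (h : ℂ) * h1)
    (by rw [angCoeff_eq]; simp [zG ρ _ le_rfl])
  have hpi := Real.pi_pos
  rw [← ENNReal.ofReal_mul (by positivity), ← ENNReal.ofReal_add
    (mul_nonneg (by positivity) (hInt H)) (mul_nonneg (by positivity) (hInt b))]
  apply ENNReal.ofReal_le_ofReal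
  have hsplit : ∫ r in (0 : ℝ)..ρ, r * (h ^ 2 * ‖angCoeff G' m r‖ ^ 2 + ‖angCoeff b m r‖ ^ 2)
      = (∫ r in (0 : ℝ)..ρ, r * ‖angCoeff H m r‖ ^ 2)
        + ∫ r in (0 : ℝ)..ρ, r * ‖angCoeff b m r‖ ^ 2 := by
    have cHm := angCoeff_continuous cH m
    rw [← intervalIntegral.integral_add]
    · congr 1
      ext r
      rw [hHm, norm_mul, Complex.norm_real, mul_pow, Real.norm_eq_abs, sq_abs]
      ring
    · exact Continuous.intervalIntegrable (by fun_prop) _ _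
    · exact Continuous.intervalIntegrable (by fun_prop) _ _
  rw [hsplit] at key
  nlinarith

/-! ### The trial function -/

/-- A smooth minorant of the positive part: `s · exp (-ε/s)` for `s > 0`, and `0` for `s ≤ 0`. -/
def softPos (ε s : ℝ) : ℝ := s * expNegInvGlue (s / ε)

theorem softPos_contDiff (ε : ℝ) : ContDiff ℝ (⊤ : ℕ∞) (softPos ε) := by
  unfold softPos
  exact contDiff_id.mul (expNegInvGlue.contDiff.comp (contDiff_id.div_const ε))

theorem softPos_of_nonpos {ε s : ℝ} (hε : 0 < ε) (hs : s ≤ 0) : softPos ε s = 0 := by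
  rw [softPos, expNegInvGlue.zero_of_nonpos (div_nonpos_of_nonpos_of_nonneg hs hε.le), mul_zero]

theorem softPos_of_pos {ε s : ℝ} (hε : 0 < ε) (hs : 0 < s) :
    softPos ε s = s * Real.exp (-(ε / s)) := by
  rw [softPos, expNegInvGlue, if_neg (not_le.2 (div_pos hs hε)), inv_div]

theorem softPos_nonneg {ε : ℝ} (hε : 0 < ε) (s : ℝ) : 0 ≤ softPos ε s := by
  rcases le_or_gt s 0 with hs | hs
  · exact (softPos_of_nonpos hε hs).ge
  · rw [softPos_of_pos hε hs]
    positivity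

theorem sub_le_softPos {ε : ℝ} (hε : 0 < ε) (s : ℝ) : s - ε ≤ softPos ε s := by
  rcases le_or_gt s 0 with hs | hs
  · rw [softPos_of_nonpos hε hs]
    linarith
  · rw [softPos_of_pos hε hs]
    have h1 := mul_le_mul_of_nonneg_left (Real.add_one_le_exp (-(ε / s))) hs.le
    have h2 : s * (-(ε / s) + 1) = s - ε := by
      field_simp
      ring
    linarith

/-- `softPos` is `1`-Lipschitz: for `s > 0` its derivative is `e^{-x}(1 + x)` with `x = ε/s`, and
for `s ≤ 0` the point `s` is a minimum. -/
theorem softPos_deriv_sq_le {ε : ℝ} (hε : 0 < ε) (s : ℝ) : deriv (softPos ε) s ^ 2 ≤ 1 := by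
  rcases le_or_gt s 0 with hs | hs
  · have h1 : IsLocalMin (softPos ε) s := Filter.Eventually.of_forall fun t => by
      rw [softPos_of_nonpos hε hs]
      exact softPos_nonneg hε t
    rw [h1.deriv_eq_zero]
    norm_num
  · have h1 : softPos ε =ᶠ[𝓝 s] fun s => s * Real.exp (-(ε / s)) := by
      filter_upwards [lt_mem_nhds hs] with t ht using softPos_of_pos hε ht
    have h2 : HasDerivAt (fun s : ℝ => -(ε / s)) (ε / s ^ 2) s := by
      refine ((hasDerivAt_inv hs.ne').const_mul (-ε)).congr_deriv (by field_simp) |>.congr_of_eventuallyEq ?_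
      filter_upwards with t
      rw [div_eq_mul_inv, neg_mul]
    have h3 : HasDerivAt (fun s : ℝ => s * Real.exp (-(ε / s)))
        (Real.exp (-(ε / s)) * (1 + ε / s)) s := by
      refine ((hasDerivAt_id s).mul h2.exp).congr_deriv ?_
      simp only [id]
      field_simp
    rw [h1.deriv_eq, h3.deriv]
    have h4 : Real.exp (-(ε / s)) * (1 + ε / s) ≤ 1 := by
      have h5 := mul_le_mul_of_nonneg_left (Real.add_one_le_exp (ε / s)) (Real.exp_pos (-(ε / s))).le
      rw [← Real.exp_add, neg_add_cancel, Real.exp_zero] at h5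
      linarith
    have h6 : 0 ≤ Real.exp (-(ε / s)) * (1 + ε / s) := by positivity
    nlinarith

/-- Integration of radial functions supported in the disk. -/
theorem integral_ball_radial {R : ℝ} (hR : 0 < R) {f : ℝ → ℝ} (hf : ∀ r, R ≤ r → f r = 0) :
    ∫ x in Metric.ball (0 : E2) R, f ‖x‖
      = 2 * volume.real (Metric.ball (0 : E2) 1) * ∫ r in (0 : ℝ)..R, r * f r := by
  rw [setIntegral_eq_integral_of_forall_compl_eq_zero, integral_fun_norm_addHaar]
  · rw [intervalIntegral.integral_of_le hR.le,
      ← setIntegral_eq_of_subset_of_forall_sdiff_eq_zero (s := Set.Ioc 0 R) (t := Set.Ioi (0 : ℝ))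
        measurableSet_Ioi (fun x hx => hx.1)]
    · simp [mul_assoc]
    · intro r hr
      have : R ≤ r := by
        by_contra hlt
        exact hr.2 ⟨hr.1, (not_le.1 hlt).le⟩
      rw [hf r this, mul_zero]
  · intro x hx
    apply hf
    simpa using hx

/-- The factor `1 - e^{b(t-R²)}` of the approximate minimiser `e^{-bt/2} (1 - e^{b(t-R²)})`, where
`t = |x|²`, smoothly cut off so that it vanishes already when `e^{b(t-R²)} ≥ 1 - ε`. -/
def profW (b R ε t : ℝ) : ℝ := softPos ε (1 - Real.exp (b * (t - R ^ 2)) - ε)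

theorem profW_contDiff (b R ε : ℝ) : ContDiff ℝ (⊤ : ℕ∞) (profW b R ε) := by
  unfold profW
  exact (softPos_contDiff ε).comp (by fun_prop)

theorem profW_deriv_sq_le (b R : ℝ) {ε : ℝ} (hε : 0 < ε) (t : ℝ) :
    deriv (profW b R ε) t ^ 2 ≤ b ^ 2 * Real.exp (b * (t - R ^ 2)) ^ 2 := by
  have h1 : HasDerivAt (fun t : ℝ => 1 - Real.exp (b * (t - R ^ 2)) - ε)
      (-(b * Real.exp (b * (t - R ^ 2)))) t := by
    refine ((((((hasDerivAt_id t).sub_const (R ^ 2)).const_mul b).exp).const_sub 1).sub_const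
      ε).congr_deriv ?_
    simp only [id]
    ring
  have h2 : HasDerivAt (profW b R ε) _ t :=
    (((softPos_contDiff ε).differentiable (by simp)
      (1 - Real.exp (b * (t - R ^ 2)) - ε)).hasDerivAt).comp t h1
  rw [h2.deriv, mul_pow]
  have h3 := softPos_deriv_sq_le hε (1 - Real.exp (b * (t - R ^ 2)) - ε)
  have h4 : 0 ≤ (-(b * Real.exp (b * (t - R ^ 2)))) ^ 2 := sq_nonneg _
  nlinarith

theorem profW_sq_ge (b R : ℝ) {ε : ℝ} (hε : 0 < ε) (t : ℝ) :
    1 - 4 * ε - 2 * Real.exp (b * (t - R ^ 2)) ≤ profW b R ε t ^ 2 := by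
  have h1 := softPos_nonneg hε (1 - Real.exp (b * (t - R ^ 2)) - ε)
  have h2 := sub_le_softPos hε (1 - Real.exp (b * (t - R ^ 2)) - ε)
  have h3 := Real.exp_pos (b * (t - R ^ 2))
  change _ ≤ softPos ε (1 - Real.exp (b * (t - R ^ 2)) - ε) ^ 2
  nlinarith [sq_nonneg (softPos ε (1 - Real.exp (b * (t - R ^ 2)) - ε) - 1)]

theorem profW_eq_zero {b R ε : ℝ} (hε : 0 < ε) {t : ℝ}
    (ht : 1 - ε ≤ Real.exp (b * (t - R ^ 2))) : profW b R ε t = 0 :=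
  softPos_of_nonpos hε (by linarith)

/-- The trial function `e^{-b|x|²/2} W(|x|²)`, with `W` the cut-off profile `profW b R ε`. -/
def trialU (b R ε : ℝ) (x : E2) : ℂ :=
  ((Real.exp (-(b / 2 * ‖x‖ ^ 2)) * profW b R ε (‖x‖ ^ 2) : ℝ) : ℂ)

theorem trialU_smooth {b R ε : ℝ} (hb : 0 < b) (hR : 0 < R) (hε : 0 < ε) :
    IsCptSmoothIn (Metric.ball 0 R) (trialU b R ε) := by
  have hsm : ContDiff ℝ (⊤ : ℕ∞) (trialU b R ε) := by
    unfold trialU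
    refine Complex.ofRealCLM.contDiff.comp (ContDiff.mul ?_ ((profW_contDiff b R ε).comp
      (contDiff_norm_sq ℝ)))
    exact (contDiff_const.mul (contDiff_norm_sq ℝ)).neg.exp
  have hsub : tsupport (trialU b R ε) ⊆ {x | Real.exp (b * (‖x‖ ^ 2 - R ^ 2)) ≤ 1 - ε} := by
    refine closure_minimal (fun x hx => ?_) (isClosed_le (by fun_prop) continuous_const)
    by_contra hlt
    have hlt : 1 - ε < Real.exp (b * (‖x‖ ^ 2 - R ^ 2)) := not_le.1 hlt
    exact hx (by simp [trialU, profW_eq_zero hε hlt.le])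
  have hball : tsupport (trialU b R ε) ⊆ Metric.ball 0 R := by
    intro x hx
    have h1 : Real.exp (b * (‖x‖ ^ 2 - R ^ 2)) ≤ 1 - ε := hsub hx
    have h2 : b * (‖x‖ ^ 2 - R ^ 2) < 0 := Real.exp_lt_one_iff.1 (by linarith)
    have h3 : ‖x‖ ^ 2 - R ^ 2 < 0 := by
      by_contra hc
      have := mul_nonneg hb.le (not_lt.1 hc)
      linarith
    rw [mem_ball_zero_iff]
    exact lt_of_pow_lt_pow_left₀ 2 hR.le (by linarith)
  exact ⟨hsm, (isCompact_closedBall (0 : E2) R).of_isClosed_subset (isClosed_tsupport _)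
    (hball.trans Metric.ball_subset_closedBall), hball⟩

theorem trialU_norm_sq (b R ε : ℝ) (x : E2) :
    ‖trialU b R ε x‖ ^ 2 = Real.exp (-(b * ‖x‖ ^ 2)) * profW b R ε (‖x‖ ^ 2) ^ 2 := by
  rw [trialU, Complex.norm_real, Real.norm_eq_abs, sq_abs, mul_pow, ← Real.exp_nat_mul]
  congr 2
  push_cast
  ring

theorem trialU_kinDens (B h b R ε : ℝ) (x : E2) :
    kinDens B h (trialU b R ε) x = Real.exp (-(b * ‖x‖ ^ 2)) * ‖x‖ ^ 2 *
      (4 * h ^ 2 * (deriv (profW b R ε) (‖x‖ ^ 2) - b / 2 * profW b R ε (‖x‖ ^ 2)) ^ 2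
        + B ^ 2 / 4 * profW b R ε (‖x‖ ^ 2) ^ 2) := by
  set t := ‖x‖ ^ 2 with ht
  have h1 : HasDerivAt (fun t : ℝ => Real.exp (-(b / 2 * t)) * profW b R ε t)
      (Real.exp (-(b / 2 * t)) * (deriv (profW b R ε) t - b / 2 * profW b R ε t)) t := by
    have e1 : HasDerivAt (fun t : ℝ => Real.exp (-(b / 2 * t)))
        (Real.exp (-(b / 2 * t)) * -(b / 2)) t :=
      (((hasDerivAt_id t).const_mul (b / 2)).neg.exp).congr_deriv (by simp)
    have e2 := ((profW_contDiff b R ε).differentiable (by simp) t).hasDerivAt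
    exact (e1.mul e2).congr_deriv (by ring)
  have h2 := (Complex.ofRealCLM.hasFDerivAt).comp x
    (h1.comp_hasFDerivAt x (hasStrictFDerivAt_norm_sq x).hasFDerivAt)
  have h3 : ∀ i, pdC i (trialU b R ε) x = ((2 * x i * (Real.exp (-(b / 2 * t)) *
      (deriv (profW b R ε) t - b / 2 * profW b R ε t)) : ℝ) : ℂ) := by
    intro i
    have h2 : HasFDerivAt (trialU b R ε) _ x := h2
    rw [pdC, h2.fderiv]
    simp [EuclideanSpace.inner_single_right]
    ring
  have hx : t = x 0 ^ 2 + x 1 ^ 2 := by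
    rw [ht, EuclideanSpace.norm_sq_eq, Fin.sum_univ_two]
    simp
  have he : Real.exp (-(b * t)) = Real.exp (-(b / 2 * t)) ^ 2 := by
    rw [← Real.exp_nat_mul]
    congr 1
    push_cast
    ring
  have hu : trialU b R ε x = ((Real.exp (-(b / 2 * t)) * profW b R ε t : ℝ) : ℂ) := rfl
  rw [kinDens, h3, h3, hu, he]
  generalize Real.exp (-(b / 2 * t)) = e
  generalize profW b R ε t = w
  generalize deriv (profW b R ε) t = w'
  rw [hx]
  have hsq : ∀ p q s : ℝ, ‖(h : ℂ) * (p : ℂ) - Complex.I * (q : ℂ) * (s : ℂ)‖ ^ 2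
      = (h * p) ^ 2 + (q * s) ^ 2 := by
    intro p q s
    rw [← Complex.normSq_eq_norm_sq, Complex.normSq_apply]
    simp
    ring
  rw [hsq, hsq]
  ring

/-- The upper bound: the trial function with `b = B/(2h)` and cut-off parameter `ε = h` has Rayleigh
quotient at most `B²R²e^{-T}/D`. -/
theorem trial_bound {h B R : ℝ} (hh : 0 < h) (hB : 0 < B) (hR : 0 < R)
    {T D : ℝ} (hT : T = B * R ^ 2 / (2 * h))
    (hD : D = (1 - 4 * h) * (1 - Real.exp (-T)) - 2 * T * Real.exp (-T)) (hD0 : 0 < D) :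
    ∃ u : E2 → ℂ, IsCptSmoothIn (Metric.ball 0 R) u ∧
      0 < ∫ x in Metric.ball (0 : E2) R, ‖u x‖ ^ 2 ∧
      (∫ x in Metric.ball (0 : E2) R, kinDens B h u x)
          - h * ∫ x in Metric.ball (0 : E2) R, B * ‖u x‖ ^ 2
        ≤ B ^ 2 * R ^ 2 * Real.exp (-T) / D * ∫ x in Metric.ball (0 : E2) R, ‖u x‖ ^ 2 := by
  obtain ⟨b, hb⟩ : ∃ b, b = B / (2 * h) := ⟨_, rfl⟩
  have hb0 : 0 < b := by rw [hb]; positivity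
  have hBb : B = 2 * h * b := by rw [hb]; field_simp
  have hTb : T = b * R ^ 2 := by rw [hT, hb]; ring
  let w : ℝ → ℝ := profW b R h
  let w' : ℝ → ℝ := deriv (profW b R h)
  have cw : Continuous w := (profW_contDiff b R h).continuous
  have cw' : Continuous w' := (profW_contDiff b R h).continuous_deriv (by simp)
  have dw : ∀ t, HasDerivAt w (w' t) t := fun t =>
    ((profW_contDiff b R h).differentiable (by simp) t).hasDerivAt
  have zw : ∀ r, R ≤ r → w (r ^ 2) = 0 := fun r hr => by
    refine profW_eq_zero hh ?_
    have : 1 ≤ Real.exp (b * (r ^ 2 - R ^ 2)) := Real.one_le_exp (mul_nonneg hb0.le (by nlinarith))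
    linarith
  have zw' : ∀ r, R ≤ r → w' (r ^ 2) = 0 := fun r hr => by
    have h1 : IsLocalMin (profW b R h) (r ^ 2) := Filter.Eventually.of_forall fun t => by
      rw [show profW b R h (r ^ 2) = 0 from zw r hr]
      exact softPos_nonneg hh _
    exact h1.deriv_eq_zero
  obtain ⟨c, hc⟩ : ∃ c, c = 2 * volume.real (Metric.ball (0 : E2) 1) := ⟨_, rfl⟩
  have hc0 : 0 < c := by
    rw [hc]
    have : 0 < volume.real (Metric.ball (0 : E2) 1) :=
      ENNReal.toReal_pos (Metric.measure_ball_pos _ _ one_pos).ne' measure_ball_lt_top.ne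
    positivity
  have hnorm : ∫ x in Metric.ball (0 : E2) R, ‖trialU b R h x‖ ^ 2
      = c * ∫ r in (0 : ℝ)..R, r * (Real.exp (-(b * r ^ 2)) * w (r ^ 2) ^ 2) := by
    simp only [trialU_norm_sq]
    rw [hc]
    exact integral_ball_radial hR (f := fun r => Real.exp (-(b * r ^ 2)) * w (r ^ 2) ^ 2)
      fun r hr => by simp [zw r hr]
  have hkin : ∫ x in Metric.ball (0 : E2) R, kinDens B h (trialU b R h) x
      = c * ∫ r in (0 : ℝ)..R, r * (Real.exp (-(b * r ^ 2)) * r ^ 2 *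
        (4 * h ^ 2 * (w' (r ^ 2) - b / 2 * w (r ^ 2)) ^ 2 + B ^ 2 / 4 * w (r ^ 2) ^ 2)) := by
    simp only [trialU_kinDens]
    rw [hc]
    exact integral_ball_radial hR (f := fun r => Real.exp (-(b * r ^ 2)) * r ^ 2 *
        (4 * h ^ 2 * (w' (r ^ 2) - b / 2 * w (r ^ 2)) ^ 2 + B ^ 2 / 4 * w (r ^ 2) ^ 2))
      fun r hr => by simp [zw r hr, zw' r hr]
  have dexp : ∀ a r : ℝ, HasDerivAt (fun r : ℝ => Real.exp (a * r ^ 2) / (2 * b))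
      (a * r * Real.exp (a * r ^ 2) / b) r := fun a r =>
    ((hasDerivAt_exp_sq a r).div_const (2 * b)).congr_deriv (by field_simp)
  have hN : c * (h / B * D)
      ≤ c * ∫ r in (0 : ℝ)..R, r * (Real.exp (-(b * r ^ 2)) * w (r ^ 2) ^ 2) := by
    refine mul_le_mul_of_nonneg_left ?_ hc0.le
    have e1 : ∫ r in (0 : ℝ)..R, ((1 - 4 * h) * (r * Real.exp (-b * r ^ 2))
        - 2 * Real.exp (-T) * r) = h / B * D := by
      have e2 := intervalIntegral.integral_eq_sub_of_hasDerivAt (a := 0) (b := R)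
        (f := fun r : ℝ => -(1 - 4 * h) * (Real.exp (-b * r ^ 2) / (2 * b)) - Real.exp (-T) * r ^ 2)
        (f' := fun r : ℝ => (1 - 4 * h) * (r * Real.exp (-b * r ^ 2)) - 2 * Real.exp (-T) * r)
        (fun r _ => (((dexp (-b) r).const_mul _).sub
          ((hasDerivAt_pow 2 r).const_mul _)).congr_deriv (by field_simp; ring))
        (Continuous.intervalIntegrable (by fun_prop) _ _)
      rw [e2, hD]
      have e3 : -b * R ^ 2 = -T := by rw [hTb]; ring
      rw [e3, hBb, hTb]
      generalize Real.exp (-(b * R ^ 2)) = e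
      simp
      field_simp
      ring
    rw [← e1]
    refine intervalIntegral.integral_mono_on hR.le (Continuous.intervalIntegrable (by fun_prop) _ _)
      (Continuous.intervalIntegrable (by fun_prop) _ _) fun r hr => ?_
    have h1 := profW_sq_ge b R hh (r ^ 2)
    have h2 : Real.exp (-(b * r ^ 2)) * Real.exp (b * (r ^ 2 - R ^ 2)) = Real.exp (-T) := by
      rw [← Real.exp_add, hTb]
      congr 1
      ring
    have h3 := mul_le_mul_of_nonneg_left h1
      (mul_nonneg hr.1 (Real.exp_pos (-(b * r ^ 2))).le)
    have h4 : -b * r ^ 2 = -(b * r ^ 2) := by ring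
    rw [h4]
    calc _ = r * Real.exp (-(b * r ^ 2)) * (1 - 4 * h - 2 * Real.exp (b * (r ^ 2 - R ^ 2))) := by
          rw [← h2]; ring
      _ ≤ _ := h3
      _ = _ := by ring
  -- upper bound for the form: all but the `w'` term is an exact derivative
  have hQ : (∫ r in (0 : ℝ)..R, r * (Real.exp (-(b * r ^ 2)) * r ^ 2 *
        (4 * h ^ 2 * (w' (r ^ 2) - b / 2 * w (r ^ 2)) ^ 2 + B ^ 2 / 4 * w (r ^ 2) ^ 2)))
      - h * (B * ∫ r in (0 : ℝ)..R, r * (Real.exp (-(b * r ^ 2)) * w (r ^ 2) ^ 2))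
      ≤ h * B * R ^ 2 * Real.exp (-T) := by
    have e1 : ∀ r, HasDerivAt (fun r : ℝ => -(h * B / 2) * (r ^ 2 * (Real.exp (-b * r ^ 2)
        * w (r ^ 2) ^ 2))) (-(h * B) * (r * Real.exp (-(b * r ^ 2)) * (w (r ^ 2) ^ 2
          + 2 * r ^ 2 * w (r ^ 2) * w' (r ^ 2) - b * r ^ 2 * w (r ^ 2) ^ 2))) r := by
      intro r
      have d1 := hasDerivAt_pow 2 r
      have d2 := (dw (r ^ 2)).comp r d1
      have d3 := (d1.mul ((hasDerivAt_exp_sq (-b) r).mul (d2.pow 2))).const_mul (-(h * B / 2))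
      refine d3.congr_deriv ?_
      simp only [Function.comp, Pi.mul_apply, Pi.pow_apply]
      rw [neg_mul]
      push_cast
      ring_nf
    have e2 := intervalIntegral.integral_eq_sub_of_hasDerivAt (a := 0) (b := R)
      (fun r _ => e1 r) (Continuous.intervalIntegrable (by fun_prop) _ _)
    have e3 : ∫ r in (0 : ℝ)..R, 4 * h ^ 2 * R ^ 2 * b ^ 2 * Real.exp (-T) ^ 2 *
        (r * Real.exp (b * r ^ 2)) = 4 * h ^ 2 * R ^ 2 * b ^ 2 * Real.exp (-T) ^ 2 *
          ((Real.exp T - 1) / (2 * b)) := by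
      rw [intervalIntegral.integral_const_mul, intervalIntegral.integral_eq_sub_of_hasDerivAt
        (f := fun r : ℝ => Real.exp (b * r ^ 2) / (2 * b))
        (fun r _ => (dexp b r).congr_deriv (by field_simp))
        (Continuous.intervalIntegrable (by fun_prop) _ _), hTb, ← sub_div]
      norm_num
    have e4 : 4 * h ^ 2 * R ^ 2 * b ^ 2 * Real.exp (-T) ^ 2 * ((Real.exp T - 1) / (2 * b))
        ≤ h * B * R ^ 2 * Real.exp (-T) := by
      have h1 : Real.exp (-T) * Real.exp T = 1 := by rw [← Real.exp_add]; simp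
      have h2 : 4 * h ^ 2 * R ^ 2 * b ^ 2 * Real.exp (-T) ^ 2 * ((Real.exp T - 1) / (2 * b))
          = 2 * h ^ 2 * R ^ 2 * b * Real.exp (-T) * (Real.exp (-T) * Real.exp T - Real.exp (-T)) := by
        field_simp
        ring
      rw [h2, h1, hBb]
      have : 0 ≤ 2 * h ^ 2 * R ^ 2 * b * Real.exp (-T) * Real.exp (-T) := by positivity
      nlinarith
    have e5 : ∫ r in (0 : ℝ)..R, ((r * (Real.exp (-(b * r ^ 2)) * r ^ 2 *
        (4 * h ^ 2 * (w' (r ^ 2) - b / 2 * w (r ^ 2)) ^ 2 + B ^ 2 / 4 * w (r ^ 2) ^ 2))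
          - h * (B * (r * (Real.exp (-(b * r ^ 2)) * w (r ^ 2) ^ 2))))
        - (-(h * B) * (r * Real.exp (-(b * r ^ 2)) * (w (r ^ 2) ^ 2
          + 2 * r ^ 2 * w (r ^ 2) * w' (r ^ 2) - b * r ^ 2 * w (r ^ 2) ^ 2))))
        ≤ ∫ r in (0 : ℝ)..R, 4 * h ^ 2 * R ^ 2 * b ^ 2 * Real.exp (-T) ^ 2 *
          (r * Real.exp (b * r ^ 2)) := by
      refine intervalIntegral.integral_mono_on hR.le
        (Continuous.intervalIntegrable (by fun_prop) _ _)
        (Continuous.intervalIntegrable (by fun_prop) _ _) fun r hr => ?_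
      have h1 : w' (r ^ 2) ^ 2 ≤ b ^ 2 * Real.exp (b * (r ^ 2 - R ^ 2)) ^ 2 :=
        profW_deriv_sq_le b R hh (r ^ 2)
      have h2 : Real.exp (-(b * r ^ 2)) * Real.exp (b * (r ^ 2 - R ^ 2)) ^ 2
          = Real.exp (-T) ^ 2 * Real.exp (b * r ^ 2) := by
        rw [← Real.exp_nat_mul, ← Real.exp_nat_mul, ← Real.exp_add, ← Real.exp_add, hTb]
        congr 1
        push_cast
        ring
      have hr0 := hr.1
      have h3 : r ^ 2 ≤ R ^ 2 := by nlinarith [hr.2]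
      calc _ = 4 * h ^ 2 * (r * Real.exp (-(b * r ^ 2))) * (r ^ 2 * w' (r ^ 2) ^ 2) := by
            rw [hBb]; ring
        _ ≤ 4 * h ^ 2 * (r * Real.exp (-(b * r ^ 2))) *
            (R ^ 2 * (b ^ 2 * Real.exp (b * (r ^ 2 - R ^ 2)) ^ 2)) := by gcongr
        _ = 4 * h ^ 2 * R ^ 2 * b ^ 2 * r *
            (Real.exp (-(b * r ^ 2)) * Real.exp (b * (r ^ 2 - R ^ 2)) ^ 2) := by ring
        _ = _ := by rw [h2]; ring
    rw [intervalIntegral.integral_sub (Continuous.intervalIntegrable (by fun_prop) _ _)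
        (Continuous.intervalIntegrable (by fun_prop) _ _),
      intervalIntegral.integral_sub (Continuous.intervalIntegrable (by fun_prop) _ _)
        (Continuous.intervalIntegrable (by fun_prop) _ _),
      intervalIntegral.integral_const_mul h, intervalIntegral.integral_const_mul B, e2, zw R le_rfl,
      e3] at e5
    simp only [ne_eq, OfNat.ofNat_ne_zero, not_false_eq_true, zero_pow, mul_zero, zero_mul,
      sub_zero] at e5
    exact e5.trans e4
  refine ⟨trialU b R h, trialU_smooth hb0 hR hh, ?_, ?_⟩
  · rw [hnorm]
    exact lt_of_lt_of_le (by positivity) hN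
  · rw [integral_const_mul, hnorm, hkin]
    rw [hnorm] at *
    have h1 := mul_le_mul_of_nonneg_left hQ hc0.le
    have h2 : B ^ 2 * R ^ 2 * Real.exp (-T) / D * (c * (h / B * D))
        = c * (h * B * R ^ 2 * Real.exp (-T)) := by field_simp
    have h3 := mul_le_mul_of_nonneg_left hN
      (show 0 ≤ B ^ 2 * R ^ 2 * Real.exp (-T) / D by positivity)
    rw [h2] at h3
    refine le_trans (le_of_eq ?_) (h1.trans h3)
    ring

/-! ### Bounds for the lowest eigenvalue -/

theorem kinDens_eq_zero (B h : ℝ) {u : E2 → ℂ} {x : E2} (hx : x ∉ tsupport u) :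
    kinDens B h u x = 0 := by
  have zf : fderiv ℝ u x = 0 := by
    by_contra hne
    exact hx (support_fderiv_subset ℝ hne)
  simp [kinDens, pdC, zf, image_eq_zero_of_notMem_tsupport hx]

/-- The lower bound of `kinDens_lower` for integrals over the disk. -/
theorem form_lower {h B R Lam : ℝ} (hh : 0 < h) (hB : 0 < B) (hR : 0 < R)
    (hLam0 : 0 ≤ Lam) (hLamR : Lam ≤ h ^ 2 / R ^ 2)
    (hLam : Lam * ∫ s in (0 : ℝ)..R, torsK (B / (2 * h)) s ≤ h * B)
    {u : E2 → ℂ} (hu : IsCptSmoothIn (Metric.ball 0 R) u) :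
    (h * B + Lam) * ∫ x in Metric.ball (0 : E2) R, ‖u x‖ ^ 2
      ≤ ∫ x in Metric.ball (0 : E2) R, kinDens B h u x := by
  have key := kinDens_lower hh hB hR hLam0 hLamR hLam hu
  obtain ⟨hsm, hcs, hsub⟩ := hu
  have huc := hsm.continuous
  have z1 : ∀ x, x ∉ tsupport u → ‖u x‖ ^ 2 = 0 := fun x hx => by
    simp [image_eq_zero_of_notMem_tsupport hx]
  have i1 : Integrable fun x => ‖u x‖ ^ 2 :=
    Continuous.integrable_of_hasCompactSupport (by fun_prop)
      (HasCompactSupport.intro hcs fun x hx => z1 x hx)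
  have i2 : Integrable (kinDens B h u) :=
    (kinDens_continuous B h hsm).integrable_of_hasCompactSupport
      (HasCompactSupport.intro hcs fun x hx => kinDens_eq_zero B h hx)
  have n2 : ∀ x, 0 ≤ kinDens B h u x := fun x => by unfold kinDens; positivity
  rw [← ofReal_integral_eq_lintegral_ofReal i1 (Eventually.of_forall fun x => by positivity),
    ← ofReal_integral_eq_lintegral_ofReal i2 (Eventually.of_forall n2),
    ← ENNReal.ofReal_mul (by positivity),
    ENNReal.ofReal_le_ofReal_iff (integral_nonneg n2)] at key
  rw [setIntegral_eq_integral_of_forall_compl_eq_zero fun x hx => z1 x fun h => hx (hsub h),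
    setIntegral_eq_integral_of_forall_compl_eq_zero fun x hx =>
      kinDens_eq_zero B h fun h => hx (hsub h)]
  exact key

theorem norm_sq_integral_pos {R : ℝ} {u : E2 → ℂ} (hu : IsCptSmoothIn (Metric.ball 0 R) u)
    (hne : u ≠ 0) : 0 < ∫ x in Metric.ball (0 : E2) R, ‖u x‖ ^ 2 := by
  obtain ⟨hsm, hcs, hsub⟩ := hu
  have huc := hsm.continuous
  have z1 : ∀ x, x ∉ tsupport u → ‖u x‖ ^ 2 = 0 := fun x hx => by
    simp [image_eq_zero_of_notMem_tsupport hx]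
  obtain ⟨x, hx⟩ := Function.ne_iff.1 hne
  rw [setIntegral_eq_integral_of_forall_compl_eq_zero fun x hx => z1 x fun h => hx (hsub h)]
  refine Continuous.integral_pos_of_hasCompactSupport_nonneg_nonzero (x := x) (by fun_prop)
    (HasCompactSupport.intro hcs fun x hx => z1 x hx) (fun x => by positivity) ?_
  simpa using hx

/-- Explicit two-sided bound for the lowest eigenvalue. The assumption `24 ≤ T` serves to make
`B²R²e^{-T} ≤ h²/R²`, the spectral bound available for the modes `m < 0`. -/
theorem lambdaP_bounds {h B R T D : ℝ} (hh : 0 < h) (hB : 0 < B) (hR : 0 < R)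
    (hT : T = B * R ^ 2 / (2 * h)) (hT24 : 24 ≤ T)
    (hD : D = (1 - 4 * h) * (1 - Real.exp (-T)) - 2 * T * Real.exp (-T)) (hD0 : 0 < D) :
    B ^ 2 * R ^ 2 * Real.exp (-T) / (1 + 128 / T)
        ≤ lambdaP (Metric.ball (0 : E2) R)
          (fun x => -B * x 1 / 2) (fun x => B * x 0 / 2) (fun _ => B) h ∧
      lambdaP (Metric.ball (0 : E2) R)
          (fun x => -B * x 1 / 2) (fun x => B * x 0 / 2) (fun _ => B) h
        ≤ B ^ 2 * R ^ 2 * Real.exp (-T) / D := by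
  have hT0 : 0 < T := by linarith
  have hTR : B * R ^ 2 = 2 * h * T := by rw [hT]; field_simp
  have hTb : B / (2 * h) * R ^ 2 = T := by rw [hT]; ring
  have hee : Real.exp (-T) * Real.exp T = 1 := by rw [← Real.exp_add]; simp
  obtain ⟨Lam, hLam⟩ : ∃ L, L = B ^ 2 * R ^ 2 * Real.exp (-T) / (1 + 128 / T) := ⟨_, rfl⟩
  have hLam0 : 0 ≤ Lam := by rw [hLam]; positivity
  have hLamR : Lam ≤ h ^ 2 / R ^ 2 := by
    have h1 : Lam ≤ B ^ 2 * R ^ 2 * Real.exp (-T) := by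
      rw [hLam]
      exact div_le_self (by positivity) (by linarith [show 0 ≤ 128 / T by positivity])
    have h2 : 4 * T ^ 2 * Real.exp (-T) ≤ 1 := by
      have h3 := Real.pow_div_factorial_le_exp T hT0.le 3
      have h4 : 4 * T ^ 2 ≤ Real.exp T := by
        refine le_trans ?_ h3
        norm_num [Nat.factorial]
        nlinarith [sq_nonneg T]
      calc _ ≤ Real.exp T * Real.exp (-T) := by gcongr
        _ = 1 := by rw [mul_comm, hee]
    rw [le_div_iff₀ (by positivity)]
    calc Lam * R ^ 2 ≤ B ^ 2 * R ^ 2 * Real.exp (-T) * R ^ 2 := by gcongr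
      _ = (B * R ^ 2) ^ 2 * Real.exp (-T) := by ring
      _ = h ^ 2 * (4 * T ^ 2 * Real.exp (-T)) := by rw [hTR]; ring
      _ ≤ h ^ 2 * 1 := by gcongr
      _ = h ^ 2 := mul_one _
  have hLamJ : Lam * ∫ s in (0 : ℝ)..R, torsK (B / (2 * h)) s ≤ h * B := by
    have h1 := torsK_integral_le (b := B / (2 * h)) (by positivity) hR
    rw [hTb] at h1
    refine (mul_le_mul_of_nonneg_left h1 hLam0).trans (le_of_eq ?_)
    have h2 : (0 : ℝ) < 1 + 128 / T := by positivity
    rw [hLam]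
    calc _ = B * (B * R ^ 2) * (Real.exp (-T) * Real.exp T) / (2 * T) := by
          generalize 1 + 128 / T = k at h2 ⊢
          field_simp
      _ = _ := by
          rw [hee, hTR]
          field_simp
  have hlow : ∀ r ∈ { r | ∃ u : E2 → ℂ, IsCptSmoothIn (Metric.ball (0 : E2) R) u ∧ u ≠ 0 ∧
      r = pauliQ (Metric.ball (0 : E2) R) (fun x => -B * x 1 / 2) (fun x => B * x 0 / 2)
        (fun _ => B) h u / ∫ x in Metric.ball (0 : E2) R, ‖u x‖ ^ 2 }, Lam ≤ r := by
    rintro r ⟨u, hu, hne, rfl⟩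
    rw [le_div_iff₀ (norm_sq_integral_pos hu hne), pauliQ, integral_const_mul]
    have h1 := form_lower hh hB hR hLam0 hLamR hLamJ hu
    have h2 : ∫ x in Metric.ball (0 : E2) R, kinDens B h u x
        = ∫ x in Metric.ball (0 : E2) R,
          (‖(h : ℂ) * pdC 0 u x - Complex.I * ((-B * x 1 / 2 : ℝ) : ℂ) * u x‖ ^ 2
            + ‖(h : ℂ) * pdC 1 u x - Complex.I * ((B * x 0 / 2 : ℝ) : ℂ) * u x‖ ^ 2) := rfl
    rw [← h2]
    linarith
  obtain ⟨u, hu, hpos, hq⟩ := trial_bound hh hB hR hT hD hD0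
  have hne : u ≠ 0 := by
    rintro rfl
    simp at hpos
  rw [← hLam]
  refine ⟨le_csInf ⟨_, u, hu, hne, rfl⟩ hlow, (csInf_le ⟨Lam, hlow⟩ ⟨u, hu, hne, rfl⟩).trans ?_⟩
  rw [div_le_iff₀ hpos]
  exact hq

/-- for the disk of radius `R` with constant magnetic field `B > 0`,
`λ_{P₋}(h) = B²R² e^{−BR²/(2h)} (1 + O(h))` as `h → 0⁺`. -/
theorem stmt8 (R B : ℝ) (hR : 0 < R) (hB : 0 < B) :
    ∃ C > 0, ∃ h₀ > 0, ∀ h : ℝ, 0 < h → h < h₀ →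
      |lambdaP (Metric.ball (0 : E2) R)
          (fun x => -B * x 1 / 2) (fun x => B * x 0 / 2) (fun _ => B) h
        - B ^ 2 * R ^ 2 * Real.exp (-B * R ^ 2 / (2 * h))|
      ≤ C * h * (B ^ 2 * R ^ 2 * Real.exp (-B * R ^ 2 / (2 * h))) := by
  obtain ⟨a, ha⟩ : ∃ a, a = B * R ^ 2 := ⟨_, rfl⟩
  have ha0 : 0 < a := by rw [ha]; positivity
  have hk : 0 < 4 + 10 / a := by positivity
  refine ⟨8 + 276 / a, by positivity, min (1 / (2 * (4 + 10 / a))) (a / 48), by positivity,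
    fun h hh hlt => ?_⟩
  obtain ⟨hlt1, hlt2⟩ := lt_min_iff.1 hlt
  obtain ⟨T, hT⟩ : ∃ T, T = a / (2 * h) := ⟨_, rfl⟩
  have hT0 : 0 < T := by rw [hT]; positivity
  have hT24 : 24 ≤ T := by
    rw [hT, le_div_iff₀ (by positivity)]
    linarith
  have hinv : 1 / T = 2 * h / a := by rw [hT]; field_simp
  have hexp : -B * R ^ 2 / (2 * h) = -T := by rw [hT, ha]; ring
  have hee : Real.exp (-T) * Real.exp T = 1 := by rw [← Real.exp_add]; simp
  have hep := Real.exp_pos (-T)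
  have hep1 := Real.exp_pos T
  have he1 : Real.exp (-T) ≤ 1 / T := by
    rw [Real.exp_neg, ← one_div]
    exact one_div_le_one_div_of_le hT0 (by linarith [Real.add_one_le_exp T])
  have he2 : T * Real.exp (-T) ≤ 2 * (1 / T) := by
    have h3 := Real.pow_div_factorial_le_exp T hT0.le 2
    norm_num [Nat.factorial] at h3
    rw [mul_one_div, le_div_iff₀ hT0]
    nlinarith
  -- `1 - y` is a lower bound for the denominator `D` of the upper estimate
  obtain ⟨y, hy⟩ : ∃ y, y = (4 + 10 / a) * h := ⟨_, rfl⟩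
  have hy0 : 0 < y := by rw [hy]; positivity
  have hy1 : y ≤ 1 / 2 := by
    rw [lt_div_iff₀ (by positivity)] at hlt1
    rw [hy]
    linarith
  have hyT : y = 4 * h + 5 * (1 / T) := by
    rw [hy, hinv]
    ring
  obtain ⟨D, hD⟩ : ∃ D, D = (1 - 4 * h) * (1 - Real.exp (-T)) - 2 * T * Real.exp (-T) := ⟨_, rfl⟩
  have hDy : 1 - y ≤ D := by
    rw [hD, hyT]
    nlinarith [mul_pos hh hep]
  have hD0 : 0 < D := by linarith
  obtain ⟨hlo, hup⟩ := lambdaP_bounds hh hB hR (by rw [hT, ha]) hT24 hD hD0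
  rw [hexp]
  generalize lambdaP (Metric.ball (0 : E2) R)
    (fun x => -B * x 1 / 2) (fun x => B * x 0 / 2) (fun _ => B) h = l at hlo hup ⊢
  have hM : 0 < B ^ 2 * R ^ 2 * Real.exp (-T) := by positivity
  generalize B ^ 2 * R ^ 2 * Real.exp (-T) = M at hM hlo hup ⊢
  have hC : (8 + 276 / a) * h = 2 * y + 128 * (1 / T) := by
    rw [hy, hinv]
    ring
  rw [hC]
  have hiT : 0 < 1 / T := by positivity
  have hup2 : M / D ≤ M * (1 + 2 * y) := by
    rw [div_le_iff₀ hD0]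
    have h1 : 1 ≤ (1 + 2 * y) * D := by nlinarith
    nlinarith
  have hlo2 : M * (1 - 128 * (1 / T)) ≤ M / (1 + 128 / T) := by
    rw [le_div_iff₀ (by positivity), show 128 / T = 128 * (1 / T) by ring]
    nlinarith [mul_pos hM (mul_pos hiT hiT)]
  rw [abs_le]
  constructor
  · nlinarith [mul_pos hM hy0]
  · nlinarith [mul_pos hM hiT]
end
end
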